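/- arXiv:1105.5763 — 3 statements merged into one kernel-verified Lean document; each statement's English description precedes it below -/
import Mathlib

section
/- For every n ≥ 1 and every k ≥ 1, the set Σ_n(k) is finite and its cardinality equals n^{k−1} · C(n, k+1), where C(n, k+1) is the binomial coefficient. -/
/-- ℓ(σ): the number of cycles (orbits) of σ, including fixed points, counted via the
minimal representative of each orbit. -/
noncomputable def cycleCount {n : ℕ} (σ : Equiv.Perm (Fin n)) : ℕ :=
  Set.ncard {x : Fin n | ∀ y, σ.SameCycle x y → x ≤ y}

/-- |σ| := n − ℓ(σ). -/
noncomputable def normPerm {n : ℕ} (σ : Equiv.Perm (Fin n)) : ℕ := n - cycleCount σ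

/-- σ₁ ≼ σ₂ iff |σ₂| = |σ₁| + |σ₁⁻¹σ₂|. -/
def precLe {n : ℕ} (σ₁ σ₂ : Equiv.Perm (Fin n)) : Prop :=
  normPerm σ₂ = normPerm σ₁ + normPerm (σ₁⁻¹ * σ₂)

/-- Σ_n(k): tuples of k transpositions with |τ₁⋯τ_k| = k and τ₁⋯τ_k ≼ (1 … n). -/
def SigmaSet (n k : ℕ) : Set (Fin k → Equiv.Perm (Fin n)) :=
  {τ | (∀ l, (τ l).IsSwap) ∧ normPerm (List.ofFn τ).prod = k ∧
      precLe (List.ofFn τ).prod (finRotate n)}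

/-- γ_m := τ₁∘⋯∘τ_m, the product of the first m entries of the chain. -/
def gammaP {n k : ℕ} (τ : Fin k → Equiv.Perm (Fin n)) (m : ℕ) : Equiv.Perm (Fin n) :=
  ((List.ofFn τ).take m).prod

open PowerSeries in
noncomputable def gser (m : ℕ) : PowerSeries ℚ :=
  PowerSeries.mk fun k => if k = 0 then (if m = 0 then 0 else 1) else
    ((m : ℚ) / 2) * PowerSeries.coeff (k - 1)
      (∑ j : Fin m, (if h : j.1 = 0 then 0 else gser j.1 * gser (m - j.1))) / k
termination_by m
decreasing_by
  · exact j.2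
  · have := j.2; omega

theorem gser_const (m : ℕ) : PowerSeries.constantCoeff (gser m) = if m = 0 then 0 else 1 := by
  rw [gser]
  simp [← PowerSeries.coeff_zero_eq_constantCoeff_apply]

theorem gser_zero : gser 0 = 0 := by
  rw [gser]
  ext k
  simp

theorem gser_deriv (m : ℕ) : PowerSeries.derivative ℚ (gser m) =
    ((m : ℚ) / 2) • ∑ j ∈ Finset.Ico 1 m, gser j * gser (m - j) := by
  have h : ∑ j ∈ Finset.Ico 1 m, gser j * gser (m - j) =
      ∑ j : Fin m, (if h : j.1 = 0 then 0 else gser j.1 * gser (m - j.1)) := by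
    rw [Fin.sum_univ_eq_sum_range (fun j => if h : j = 0 then 0 else gser j * gser (m - j))]
    rw [Finset.range_eq_Ico]
    rcases Nat.eq_zero_or_pos m with rfl | hm
    · simp
    · rw [Finset.sum_eq_sum_Ico_succ_bot hm]
      simp only [dite_true, zero_add]
      apply Finset.sum_congr rfl
      intro j hj
      rw [dif_neg]
      have := (Finset.mem_Ico.1 hj).1
      omega
  rw [h]
  ext k
  rw [PowerSeries.coeff_derivative]
  conv_lhs => rw [gser]
  rw [PowerSeries.coeff_mk, PowerSeries.coeff_smul]
  simp only [Nat.add_eq_zero_iff, one_ne_zero, and_false, if_false, Nat.add_sub_cancel]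
  have : ((k : ℚ) + 1) ≠ 0 := by positivity
  push_cast
  rw [smul_eq_mul]
  field_simp

theorem gser_deriv' (m : ℕ) : PowerSeries.derivative ℚ (gser m) =
    ((m : ℚ) / 2) • ∑ p ∈ Finset.HasAntidiagonal.antidiagonal m, gser p.1 * gser p.2 := by
  rw [gser_deriv, Finset.Nat.sum_antidiagonal_eq_sum_range_succ (fun i j => gser i * gser j)]
  congr 1
  rw [Finset.sum_range_succ, Nat.sub_self, gser_zero, mul_zero, add_zero, Finset.range_eq_Ico]
  rcases Nat.eq_zero_or_pos m with rfl | hm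
  · simp
  · rw [Finset.sum_eq_sum_Ico_succ_bot hm, gser_zero]
    simp

noncomputable def delt : Derivation ℚ (PowerSeries (PowerSeries ℚ)) (PowerSeries (PowerSeries ℚ)) :=
  Derivation.mk'
    { toFun := fun F => PowerSeries.mk fun m => PowerSeries.derivative ℚ (PowerSeries.coeff m F)
      map_add' := by intro F G; ext1 m; simp
      map_smul' := by
        intro r F; ext1 m
        simp }
    (by
      intro F G
      ext1 m
      simp only [LinearMap.coe_mk, AddHom.coe_mk, PowerSeries.coeff_mk, map_add, smul_eq_mul,
        PowerSeries.coeff_mul, map_sum, Derivation.leibniz, Finset.sum_add_distrib]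
      congr 1
      rw [← Finset.Nat.sum_antidiagonal_swap]
      rfl)

theorem coeff_delt (F) (m : ℕ) : PowerSeries.coeff m (delt F) =
    PowerSeries.derivative ℚ (PowerSeries.coeff m F) := by
  simp [delt]

noncomputable def thet : Derivation ℚ (PowerSeries (PowerSeries ℚ)) (PowerSeries (PowerSeries ℚ)) :=
  Derivation.mk'
    { toFun := fun F => PowerSeries.mk fun m => (m : ℚ) • (PowerSeries.coeff m F)
      map_add' := by intro F G; ext1 m; simp
      map_smul' := by
        intro r F; ext1 m
        simp only [PowerSeries.coeff_smul, PowerSeries.coeff_mk, RingHom.id_apply]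
        rw [smul_comm] }
    (by
      intro F G
      ext1 m
      simp only [LinearMap.coe_mk, AddHom.coe_mk, PowerSeries.coeff_mk, map_add, smul_eq_mul]
      rw [mul_comm G]
      simp only [PowerSeries.coeff_mul, Finset.smul_sum, PowerSeries.coeff_mk]
      rw [← Finset.sum_add_distrib]
      apply Finset.sum_congr rfl
      intro p hp
      rw [← Finset.HasAntidiagonal.mem_antidiagonal.1 hp, mul_smul_comm, smul_mul_assoc, ← add_smul]
      push_cast
      rw [add_comm])

theorem coeff_thet (F) (m : ℕ) : PowerSeries.coeff m (thet F) =
    (m : ℚ) • (PowerSeries.coeff m F) := by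
  simp [thet]

theorem delt_thet (F) : delt (thet F) = thet (delt F) := by
  ext1 m
  rw [coeff_delt, coeff_thet, coeff_thet, coeff_delt, Derivation.map_smul]

theorem delt_thet_iter (k : ℕ) (F) : delt (thet^[k] F) = thet^[k] (delt F) := by
  induction k generalizing F with
  | zero => rfl
  | succ k ih => rw [Function.iterate_succ_apply, ih, delt_thet, Function.iterate_succ_apply]

noncomputable def Wser : PowerSeries (PowerSeries ℚ) := PowerSeries.mk gser

theorem delt_W : delt Wser = Wser * thet Wser := by
  have h : (2 : ℚ) • (Wser * thet Wser) = thet (Wser ^ 2) := by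
    rw [Derivation.leibniz_pow]
    simp [two_smul]
  have h2 : (2 : ℚ) • delt Wser = thet (Wser ^ 2) := by
    ext1 m
    rw [PowerSeries.coeff_smul, coeff_delt, coeff_thet, sq, PowerSeries.coeff_mul]
    simp only [Wser, PowerSeries.coeff_mk]
    rw [gser_deriv', smul_smul]
    congr 1; ring
  rw [← h] at h2
  exact smul_right_injective _ (two_ne_zero) h2

theorem delt_iter_W (k : ℕ) : ((k : ℚ) + 1) • delt^[k] Wser = thet^[k] (Wser ^ (k + 1)) := by
  induction k with
  | zero => simp
  | succ k ih =>
    have h1 := congrArg delt ih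
    rw [Derivation.map_smul, delt_thet_iter, Derivation.leibniz_pow, delt_W] at h1
    have h0 : ((k : ℚ) + 1) ≠ 0 := by positivity
    have h2 : thet (Wser ^ (k+1+1)) = ((k : ℚ) + 2) • (Wser ^ (k+1) * thet Wser) := by
      rw [Derivation.leibniz_pow]
      simp only [Nat.add_sub_cancel, smul_eq_mul]
      rw [← Nat.cast_smul_eq_nsmul ℚ]; push_cast; congr 1; ring
    have h3 : (k + 1) • Wser ^ (k + 1 - 1) • (Wser * thet Wser) =
       ((k : ℚ) + 1) • (Wser ^ (k+1) * thet Wser) := by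
      simp only [Nat.add_sub_cancel, smul_eq_mul]
      rw [← Nat.cast_smul_eq_nsmul ℚ]; push_cast; congr 1; ring
    have hl : ∀ (r : ℚ) (F), thet^[k] (r • F) = r • thet^[k] F := by
      intro r F
      have : ∀ F, thet (r • F) = r • thet F := by
        intro F
        ext1 m
        rw [coeff_thet, PowerSeries.coeff_smul, PowerSeries.coeff_smul, coeff_thet, smul_comm]
      clear h1 ih h0 h2 h3
      induction k generalizing F with
      | zero => rfl
      | succ k ih => rw [Function.iterate_succ_apply, this, ih, Function.iterate_succ_apply]
    rw [h3, hl] at h1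
    have h4 := smul_right_injective _ h0 h1
    rw [Function.iterate_succ_apply' delt, Function.iterate_succ_apply thet, h2, hl, ← h4]
    push_cast; congr 1; ring

theorem coeff_thet_iter (k m : ℕ) (F) : PowerSeries.coeff m (thet^[k] F) =
    ((m : ℚ) ^ k) • (PowerSeries.coeff m F) := by
  induction k with
  | zero => simp
  | succ k ih => rw [Function.iterate_succ_apply', coeff_thet, ih, smul_smul, pow_succ']

theorem coeff_delt_iter (k m : ℕ) (F) : PowerSeries.coeff m (delt^[k] F) =
    (PowerSeries.derivative ℚ)^[k] (PowerSeries.coeff m F) := by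
  induction k with
  | zero => simp
  | succ k ih => rw [Function.iterate_succ_apply', coeff_delt, ih, Function.iterate_succ_apply']

theorem gser_final (m k : ℕ) (hm : 1 ≤ m) (hk : 1 ≤ k) :
    PowerSeries.constantCoeff ((PowerSeries.derivative ℚ)^[k] (gser m)) =
      (m : ℚ) ^ (k - 1) * (m.choose (k + 1) : ℚ) := by
  have h := congrArg (fun F => PowerSeries.constantCoeff (PowerSeries.coeff m F)) (delt_iter_W k)
  simp only [PowerSeries.coeff_smul, coeff_thet_iter, coeff_delt_iter] at h
  have hW : PowerSeries.constantCoeff (PowerSeries.coeff m (Wser ^ (k+1))) =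
      ((m-1).choose k : ℚ) := by
    have h1 : PowerSeries.map PowerSeries.constantCoeff Wser = PowerSeries.X * PowerSeries.mk 1 := by
      ext j
      cases j with
      | zero => simp [Wser, gser_zero]
      | succ j => simp [Wser, gser_const, PowerSeries.coeff_succ_X_mul]
    rw [← PowerSeries.coeff_map, map_pow, h1, mul_pow, PowerSeries.mk_one_pow_eq_mk_choose_add,
      PowerSeries.coeff_X_pow_mul']
    split_ifs with hkm
    · rw [PowerSeries.coeff_mk]
      congr 2; omega
    · rw [Nat.choose_eq_zero_of_lt (by omega)]; simp
  have hs : ∀ (r : ℚ) (f : PowerSeries ℚ), PowerSeries.constantCoeff (r • f) = r * PowerSeries.constantCoeff f := by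
    intro r f
    rw [← PowerSeries.coeff_zero_eq_constantCoeff_apply, PowerSeries.coeff_smul,
      PowerSeries.coeff_zero_eq_constantCoeff_apply, smul_eq_mul]
  rw [hs, hs, hW] at h
  have h5 : PowerSeries.coeff m Wser = gser m := by simp [Wser]
  rw [h5] at h
  have h0 : ((k : ℚ) + 1) ≠ 0 := by positivity
  apply mul_left_cancel₀ h0
  rw [h]
  obtain ⟨m, rfl⟩ := Nat.exists_eq_add_of_le' hm
  obtain ⟨k, rfl⟩ := Nat.exists_eq_add_of_le' hk
  have h6 := Nat.add_one_mul_choose_eq m (k+1)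
  have h7 : ((m:ℚ) + 1) * (m.choose (k+1) : ℚ) = ((m+1).choose (k+1+1) : ℚ) * ((k : ℚ)+1+1) := by exact_mod_cast h6
  simp only [Nat.add_sub_cancel]
  push_cast
  rw [pow_succ, mul_assoc, h7]
  ring

open Equiv in
/-- orbit of x under σ as a finset -/
noncomputable def orb {n : ℕ} (σ : Perm (Fin n)) (x : Fin n) : Finset (Fin n) := by
  classical exact Finset.univ.filter (fun y => σ.SameCycle x y)

open Equiv in
noncomputable def orbs {n : ℕ} (σ : Perm (Fin n)) : Finset (Finset (Fin n)) :=
  Finset.univ.image (orb σ)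

section combi
open Equiv
variable {n : ℕ}

theorem mem_orb {σ : Perm (Fin n)} {x y : Fin n} : y ∈ orb σ x ↔ σ.SameCycle x y := by
  simp [orb]

theorem self_mem_orb (σ : Perm (Fin n)) (x : Fin n) : x ∈ orb σ x := mem_orb.2 (Perm.SameCycle.refl _ _)

theorem orb_eq_iff {σ : Perm (Fin n)} {x y : Fin n} : orb σ x = orb σ y ↔ σ.SameCycle x y := by
  constructor
  · intro h
    rw [← mem_orb, h]; exact self_mem_orb σ y
  · intro h
    ext z
    rw [mem_orb, mem_orb]
    exact ⟨fun h' => h.symm.trans h', fun h' => h.trans h'⟩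

theorem mem_orb_pow {σ : Perm (Fin n)} {x y : Fin n} : y ∈ orb σ x ↔ ∃ i : ℕ, (σ ^ i) x = y := by
  rw [mem_orb]
  constructor
  · intro h; exact h.exists_nat_pow_eq
  · rintro ⟨i, rfl⟩; exact ⟨i, by simp⟩

theorem mem_orbs {σ : Perm (Fin n)} {O : Finset (Fin n)} : O ∈ orbs σ ↔ ∃ x, orb σ x = O := by
  simp [orbs]

theorem cycleCount_eq (σ : Perm (Fin n)) : cycleCount σ = (orbs σ).card := by
  classical
  unfold cycleCount
  have : {x : Fin n | ∀ y, σ.SameCycle x y → x ≤ y} =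
      ((Finset.univ.filter fun x : Fin n => ∀ y, σ.SameCycle x y → x ≤ y : Finset (Fin n)) : Set (Fin n)) := by
    ext; simp
  rw [this, Set.ncard_coe_finset]
  refine Finset.card_bij (fun x _ => orb σ x) ?_ ?_ ?_
  · intro x _; exact mem_orbs.2 ⟨x, rfl⟩
  · intro x hx y hy h
    simp only [Finset.mem_filter, Finset.mem_univ, true_and] at hx hy
    rw [orb_eq_iff] at h
    exact le_antisymm (hx _ h) (hy _ h.symm)
  · intro O hO
    obtain ⟨x, rfl⟩ := mem_orbs.1 hO
    have hne : (orb σ x).Nonempty := ⟨x, self_mem_orb σ x⟩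
    refine ⟨(orb σ x).min' hne, ?_, ?_⟩
    · simp only [Finset.mem_filter, Finset.mem_univ, true_and]
      intro y hy
      apply Finset.min'_le
      rw [mem_orb]
      exact (mem_orb.1 ((orb σ x).min'_mem hne)).trans hy
    · rw [orb_eq_iff]
      exact (mem_orb.1 ((orb σ x).min'_mem hne)).symm

theorem cycleCount_le (σ : Perm (Fin n)) : cycleCount σ ≤ n := by
  rw [cycleCount_eq]
  refine Finset.card_image_le.trans ?_
  simp

/-- orbit from period -/
theorem orb_of_period {f : Perm (Fin n)} {a : Fin n} {j : ℕ} (hj : 0 < j) (h : (f ^ j) a = a) :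
    orb f a = (Finset.range j).image (fun i => (f ^ i) a) := by
  ext y
  rw [mem_orb_pow]
  simp only [Finset.mem_image, Finset.mem_range]
  constructor
  · rintro ⟨i, rfl⟩
    refine ⟨i % j, Nat.mod_lt _ hj, ?_⟩
    conv_rhs => rw [← Nat.mod_add_div i j, pow_add, Perm.mul_apply, pow_mul]
    have : ∀ q, ((f ^ j) ^ q) a = a := by
      intro q
      induction q with
      | zero => rfl
      | succ q ih => rw [pow_succ, Perm.mul_apply, h, ih]
    rw [this]
  · rintro ⟨i, _, rfl⟩; exact ⟨i, rfl⟩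

theorem orb_period (σ : Perm (Fin n)) (a : Fin n) :
    (σ ^ (orb σ a).card) a = a ∧
    ∀ i < (orb σ a).card, ∀ j < (orb σ a).card, (σ ^ i) a = (σ ^ j) a → i = j := by
  have hper : a ∈ Function.periodicPts σ := by
    refine ⟨orderOf σ, orderOf_pos σ, ?_⟩
    rw [Function.IsPeriodicPt, Function.IsFixedPt, Perm.iterate_eq_pow, pow_orderOf_eq_one]; rfl
  have hpos := Function.minimalPeriod_pos_of_mem_periodicPts hper
  have h1 : (σ ^ (Function.minimalPeriod σ a)) a = a := by
    rw [← Perm.iterate_eq_pow]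
    exact Function.iterate_minimalPeriod
  have h2 : ∀ i < Function.minimalPeriod σ a, ∀ j < Function.minimalPeriod σ a,
      (σ ^ i) a = (σ ^ j) a → i = j := by
    intro i hi j hj h
    rw [← Perm.iterate_eq_pow, ← Perm.iterate_eq_pow] at h
    exact Function.iterate_injOn_Iio_minimalPeriod hi hj h
  have h3 : (orb σ a).card = Function.minimalPeriod σ a := by
    rw [orb_of_period hpos h1, Finset.card_image_of_injOn, Finset.card_range]
    intro i hi j hj h
    exact h2 i (by simpa using hi) j (by simpa using hj) h
  rw [h3]
  exact ⟨h1, h2⟩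

theorem orb_card_pos (σ : Perm (Fin n)) (a : Fin n) : 0 < (orb σ a).card :=
  Finset.card_pos.2 ⟨a, self_mem_orb σ a⟩

/-- iterates agree while avoiding a, b -/
theorem swap_pow_eq {σ : Perm (Fin n)} {a b x : Fin n} {j : ℕ}
    (h : ∀ i, 0 < i → i < j → (σ ^ i) x ≠ a ∧ (σ ^ i) x ≠ b) :
    ∀ i < j, ((swap a b * σ) ^ i) x = (σ ^ i) x := by
  intro i
  induction i with
  | zero => intro _; rfl
  | succ i ih =>
    intro hi
    rw [pow_succ', Perm.mul_apply, ih (by omega), Perm.mul_apply]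
    have := h (i+1) (by omega) hi
    rw [pow_succ', Perm.mul_apply] at this ⊢
    exact swap_apply_of_ne_of_ne this.1 this.2

theorem swap_pow_last {σ : Perm (Fin n)} {a b x : Fin n} {j : ℕ} (hj : 0 < j)
    (h : ∀ i, 0 < i → i < j → (σ ^ i) x ≠ a ∧ (σ ^ i) x ≠ b) :
    ((swap a b * σ) ^ j) x = swap a b ((σ ^ j) x) := by
  obtain ⟨j, rfl⟩ := Nat.exists_eq_add_of_le' hj
  rw [pow_succ', Perm.mul_apply, swap_pow_eq h j (by omega), Perm.mul_apply, pow_succ', Perm.mul_apply]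

theorem swap_orb_split {σ : Perm (Fin n)} {a : Fin n} {j : ℕ} (hj : 0 < j) (hjm : j < (orb σ a).card) :
    orb (swap a ((σ ^ j) a) * σ) a = (Finset.range j).image (fun i => (σ ^ i) a) ∧
    orb (swap a ((σ ^ j) a) * σ) ((σ ^ j) a) =
      (Finset.Ico j (orb σ a).card).image (fun i => (σ ^ i) a) := by
  obtain ⟨hp, hinj⟩ := orb_period σ a
  set m := (orb σ a).card with hm
  have h1 : ∀ i, 0 < i → i < j → (σ ^ i) a ≠ a ∧ (σ ^ i) a ≠ (σ ^ j) a := by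
    intro i hi hij
    refine ⟨fun h => ?_, fun h => ?_⟩
    · have := hinj i (by omega) 0 (by omega) (by simpa using h)
      omega
    · have := hinj i (by omega) j (by omega) h
      omega
  have h2 : ∀ i, 0 < i → i < m - j → (σ ^ i) ((σ ^ j) a) ≠ a ∧ (σ ^ i) ((σ ^ j) a) ≠ (σ ^ j) a := by
    intro i hi hij
    rw [← Perm.mul_apply, ← pow_add]
    refine ⟨fun h => ?_, fun h => ?_⟩
    · have := hinj (i+j) (by omega) 0 (by omega) (by simpa using h)
      omega
    · have := hinj (i+j) (by omega) j (by omega) h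
      omega
  constructor
  · rw [orb_of_period hj]
    · apply Finset.image_congr
      intro i hi
      exact swap_pow_eq h1 i (by simpa using hi)
    · rw [swap_pow_last hj h1, swap_apply_right]
  · rw [orb_of_period (j := m - j) (by omega)]
    · ext y
      simp only [Finset.mem_image, Finset.mem_range, Finset.mem_Ico]
      constructor
      · rintro ⟨i, hi, rfl⟩
        refine ⟨i + j, by omega, ?_⟩
        rw [swap_pow_eq h2 i hi, pow_add, Perm.mul_apply]
      · rintro ⟨i, hi, rfl⟩
        refine ⟨i - j, by omega, ?_⟩
        rw [swap_pow_eq h2 _ (by omega), ← Perm.mul_apply, ← pow_add]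
        congr 2; omega
    · rw [swap_pow_last (by omega) h2, ← Perm.mul_apply (σ ^ (m - j)), ← pow_add, Nat.sub_add_cancel hjm.le, hp,
        swap_apply_left]

theorem swap_orb_other {σ : Perm (Fin n)} {a b x : Fin n} (hab : σ.SameCycle a b) (hx : ¬ σ.SameCycle a x) :
    orb (swap a b * σ) x = orb σ x := by
  have h : ∀ i, (σ ^ i) x ≠ a ∧ (σ ^ i) x ≠ b := by
    intro i
    have : σ.SameCycle x ((σ ^ i) x) := ⟨i, by simp⟩
    constructor
    · intro h; rw [h] at this; exact hx this.symm
    · intro h; rw [h] at this; exact hx (hab.trans this.symm)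
  ext y
  rw [mem_orb_pow, mem_orb_pow]
  have : ∀ i : ℕ, ((swap a b * σ) ^ i) x = (σ ^ i) x := fun i =>
    swap_pow_eq (j := i + 1) (fun i _ _ => h i) i (by omega)
  simp [this]

/-- the splitting lemma -/
theorem orbs_split {σ : Perm (Fin n)} {a : Fin n} {j : ℕ} (hj : 0 < j) (hjm : j < (orb σ a).card) :
    ∃ O₁ O₂ : Finset (Fin n), O₁.card = j ∧ O₂.card = (orb σ a).card - j ∧ O₁ ≠ O₂ ∧
      O₁ ∉ (orbs σ).erase (orb σ a) ∧ O₂ ∉ (orbs σ).erase (orb σ a) ∧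
      orbs (swap a ((σ ^ j) a) * σ) = insert O₁ (insert O₂ ((orbs σ).erase (orb σ a))) := by
  obtain ⟨h1, h2⟩ := swap_orb_split hj hjm
  obtain ⟨hp, hinj⟩ := orb_period σ a
  set b := (σ ^ j) a with hb
  have hab : σ.SameCycle a b := ⟨j, by simp [hb]⟩
  set m := (orb σ a).card with hm
  set O₁ := (Finset.range j).image (fun i => (σ ^ i) a) with hO1
  set O₂ := (Finset.Ico j m).image (fun i => (σ ^ i) a) with hO2
  have hun : ∀ y ∈ orb σ a, y ∈ O₁ ∨ y ∈ O₂ := by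
    intro y hy
    rw [orb_of_period (orb_card_pos σ a) hp] at hy
    simp only [Finset.mem_image, Finset.mem_range, hO1, hO2, Finset.mem_Ico] at hy ⊢
    obtain ⟨i, hi, rfl⟩ := hy
    by_cases h : i < j
    · exact Or.inl ⟨i, h, rfl⟩
    · exact Or.inr ⟨i, ⟨by omega, hi⟩, rfl⟩
  have ha1 : a ∈ O₁ := by rw [← h1]; exact self_mem_orb _ _
  have hb2 : b ∈ O₂ := by rw [← h2]; exact self_mem_orb _ _
  have hno : ∀ x, x ∈ orb σ a → ∀ O ∈ (orbs σ).erase (orb σ a), x ∉ O := by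
    intro x hx O hO hxO
    rw [Finset.mem_erase, mem_orbs] at hO
    obtain ⟨hne, y, rfl⟩ := hO
    apply hne
    rw [mem_orb] at hx hxO
    rw [orb_eq_iff]
    exact hxO.trans hx.symm
  refine ⟨O₁, O₂, ?_, ?_, ?_, ?_, ?_, ?_⟩
  · rw [hO1, Finset.card_image_of_injOn, Finset.card_range]
    intro i hi k hk h
    simp only [Finset.coe_range, Set.mem_Iio] at hi hk
    exact hinj i (by omega) k (by omega) h
  · rw [hO2, Finset.card_image_of_injOn, Nat.card_Ico]
    intro i hi k hk h
    simp only [Finset.coe_Ico, Set.mem_Ico] at hi hk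
    exact hinj i (by omega) k (by omega) h
  · intro h
    rw [h] at ha1
    simp only [hO2, Finset.mem_image, Finset.mem_Ico] at ha1
    obtain ⟨i, hi, h⟩ := ha1
    have := hinj i (by omega) 0 (by omega) (by simpa using h)
    omega
  · intro h; exact hno a (self_mem_orb _ _) _ h ha1
  · intro h; exact hno b (mem_orb.2 hab) _ h hb2
  · ext O
    simp only [Finset.mem_insert, Finset.mem_erase, mem_orbs]
    constructor
    · rintro ⟨x, rfl⟩
      by_cases hx : σ.SameCycle a x
      · rcases hun x (mem_orb.2 hx) with h | h
        · left; rw [← h1] at h ⊢; exact orb_eq_iff.2 (mem_orb.1 h).symm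
        · right; left; rw [← h2] at h ⊢; exact orb_eq_iff.2 (mem_orb.1 h).symm
      · right; right
        rw [swap_orb_other hab hx]
        exact ⟨fun h => hx (orb_eq_iff.1 h).symm, x, rfl⟩
    · rintro (rfl | rfl | ⟨hne, x, rfl⟩)
      · exact ⟨a, h1⟩
      · exact ⟨b, h2⟩
      · refine ⟨x, swap_orb_other hab ?_⟩
        intro h; exact hne (orb_eq_iff.2 h.symm)

theorem exists_pow_of_sameCycle {σ : Perm (Fin n)} {a b : Fin n} (hne : a ≠ b) (h : σ.SameCycle a b) :
    ∃ j, 0 < j ∧ j < (orb σ a).card ∧ (σ ^ j) a = b := by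
  have hb := mem_orb.2 h
  rw [orb_of_period (orb_card_pos σ a) (orb_period σ a).1] at hb
  simp only [Finset.mem_image, Finset.mem_range] at hb
  obtain ⟨j, hj, rfl⟩ := hb
  refine ⟨j, Nat.pos_of_ne_zero ?_, hj, rfl⟩
  rintro rfl
  exact hne rfl

theorem cycleCount_swap_same {σ : Perm (Fin n)} {a b : Fin n} (hne : a ≠ b) (h : σ.SameCycle a b) :
    cycleCount (swap a b * σ) = cycleCount σ + 1 := by
  obtain ⟨j, hj, hjm, rfl⟩ := exists_pow_of_sameCycle hne h
  obtain ⟨O₁, O₂, -, -, h12, h1, h2, h3⟩ := orbs_split hj hjm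
  rw [cycleCount_eq, cycleCount_eq, h3, Finset.card_insert_of_notMem, Finset.card_insert_of_notMem h2,
    Finset.card_erase_of_mem (mem_orbs.2 ⟨a, rfl⟩)]
  · have : 0 < (orbs σ).card := Finset.card_pos.2 ⟨_, mem_orbs.2 ⟨a, rfl⟩⟩
    omega
  · simp only [Finset.mem_insert, not_or]; exact ⟨h12, h1⟩

theorem sameCycle_swap_of_not {σ : Perm (Fin n)} {a b : Fin n} (h : ¬ σ.SameCycle a b) :
    (swap a b * σ).SameCycle a b := by
  obtain ⟨hp, hinj⟩ := orb_period σ a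
  have h1 : ∀ i, 0 < i → i < (orb σ a).card → (σ ^ i) a ≠ a ∧ (σ ^ i) a ≠ b := by
    intro i hi hij
    refine ⟨fun h => ?_, fun h' => h ⟨i, by simpa using h'⟩⟩
    have := hinj i (by omega) 0 (by omega) (by simpa using h)
    omega
  have := swap_pow_last (orb_card_pos σ a) h1
  rw [hp, swap_apply_left] at this
  exact ⟨(orb σ a).card, by simpa using this⟩

theorem cycleCount_swap_not {σ : Perm (Fin n)} {a b : Fin n} (h : ¬ σ.SameCycle a b) :
    cycleCount σ = cycleCount (swap a b * σ) + 1 := by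
  have hne : a ≠ b := by rintro rfl; exact h (Perm.SameCycle.refl _ _)
  have := cycleCount_swap_same hne (sameCycle_swap_of_not h)
  rwa [← mul_assoc, swap_mul_self, one_mul] at this

theorem norm_swap_same {σ : Perm (Fin n)} {a b : Fin n} (hne : a ≠ b) (h : σ.SameCycle a b) :
    normPerm σ = 1 + normPerm (swap a b * σ) := by
  have := cycleCount_swap_same hne h
  have := cycleCount_le (swap a b * σ)
  unfold normPerm
  omega

theorem norm_swap_not {σ : Perm (Fin n)} {a b : Fin n} (h : ¬ σ.SameCycle a b) :
    normPerm (swap a b * σ) = 1 + normPerm σ := by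
  have := cycleCount_swap_not h
  have := cycleCount_le σ
  unfold normPerm
  omega

theorem norm_swap_iff {σ : Perm (Fin n)} {a b : Fin n} (hne : a ≠ b) :
    normPerm σ = 1 + normPerm (swap a b * σ) ↔ σ.SameCycle a b := by
  refine ⟨fun h => ?_, norm_swap_same hne⟩
  by_contra hc
  have := norm_swap_not hc
  omega

theorem norm_swap_le {σ τ : Perm (Fin n)} (hτ : τ.IsSwap) : normPerm (τ * σ) ≤ 1 + normPerm σ := by
  obtain ⟨a, b, hne, rfl⟩ := hτ
  by_cases h : σ.SameCycle a b
  · have := norm_swap_same hne h; omega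
  · have := norm_swap_not h; omega

theorem normPerm_one : normPerm (1 : Perm (Fin n)) = 0 := by
  unfold normPerm
  have : cycleCount (1 : Perm (Fin n)) = n := by
    unfold cycleCount
    have : {x : Fin n | ∀ y, (1 : Perm (Fin n)).SameCycle x y → x ≤ y} = Set.univ := by
      ext x
      simp only [Set.mem_ofPred_eq, Set.mem_univ, iff_true, Perm.sameCycle_one]
      rintro y rfl; exact le_refl _
    rw [this, Set.ncard_univ, Nat.card_fin]
  omega

theorem normPerm_mul_le (x y : Perm (Fin n)) : normPerm (x * y) ≤ normPerm x + normPerm y := by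
  induction hk : normPerm x using Nat.strong_induction_on generalizing x with
  | _ k ih =>
    by_cases hx : x = 1
    · subst hx; simp
    · have : ∃ a, x a ≠ a := by
        by_contra hc
        push Not at hc
        exact hx (Perm.ext hc)
      obtain ⟨a, ha⟩ := this
      have h1 := norm_swap_same (σ := x) (a := a) (b := x a) (Ne.symm ha) ⟨1, by simp⟩
      have h2 := ih _ (by omega) (swap a (x a) * x) rfl
      have h3 := norm_swap_le (σ := swap a (x a) * x * y) (τ := swap a (x a)) ⟨a, x a, Ne.symm ha, rfl⟩
      rw [← mul_assoc, ← mul_assoc, swap_mul_self, one_mul] at h3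
      omega

theorem normPerm_prod_le (l : List (Perm (Fin n))) (h : ∀ t ∈ l, t.IsSwap) : normPerm l.prod ≤ l.length := by
  induction l with
  | nil => simp [normPerm_one]
  | cons t l ih =>
    rw [List.prod_cons, List.length_cons]
    have := norm_swap_le (σ := l.prod) (h t (by simp))
    have := ih (fun t ht => h t (by simp [ht]))
    omega

def GSet (σ : Perm (Fin n)) (k : ℕ) : Set (Fin k → Perm (Fin n)) :=
  {τ | (∀ l, (τ l).IsSwap) ∧ normPerm σ = k + normPerm ((List.ofFn τ).prod⁻¹ * σ)}

theorem SigmaSet_eq (k : ℕ) : SigmaSet n k = GSet (finRotate n) k := by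
  ext τ
  simp only [SigmaSet, GSet, Set.mem_ofPred_eq, precLe]
  constructor
  · rintro ⟨h1, h2, h3⟩
    exact ⟨h1, by omega⟩
  · rintro ⟨h1, h2⟩
    have h3 : normPerm (List.ofFn τ).prod ≤ k := by
      refine (normPerm_prod_le _ ?_).trans_eq (List.length_ofFn)
      intro t ht
      obtain ⟨i, rfl⟩ := (List.mem_ofFn' _ _).1 ht
      exact h1 i
    have h4 := normPerm_mul_le (List.ofFn τ).prod ((List.ofFn τ).prod⁻¹ * finRotate n)
    rw [mul_inv_cancel_left] at h4
    refine ⟨h1, by omega, by omega⟩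

theorem GSet_cons (σ : Perm (Fin n)) (k : ℕ) (t : Perm (Fin n)) (τ : Fin k → Perm (Fin n)) :
    (Fin.cons t τ : Fin (k+1) → Perm (Fin n)) ∈ GSet σ (k+1) ↔
      (t.IsSwap ∧ normPerm σ = 1 + normPerm (t * σ)) ∧ τ ∈ GSet (t * σ) k := by
  simp only [GSet, Set.mem_ofPred_eq, Fin.forall_fin_succ, Fin.cons_zero, Fin.cons_succ, List.ofFn_succ,
    List.prod_cons]
  have key : t.IsSwap → (t * (List.ofFn τ).prod)⁻¹ * σ = (List.ofFn τ).prod⁻¹ * (t * σ) := by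
    rintro ⟨a, b, hne, rfl⟩
    rw [mul_inv_rev, swap_inv, mul_assoc]
  constructor
  · rintro ⟨⟨h1, h2⟩, h3⟩
    rw [key h1] at h3
    have h4 : normPerm (List.ofFn τ).prod ≤ k := by
      refine (normPerm_prod_le _ ?_).trans_eq (List.length_ofFn)
      intro t ht
      obtain ⟨i, rfl⟩ := (List.mem_ofFn' _ _).1 ht
      exact h2 i
    have h5 := normPerm_mul_le (List.ofFn τ).prod ((List.ofFn τ).prod⁻¹ * (t * σ))
    rw [mul_inv_cancel_left] at h5
    have h6 := norm_swap_le (σ := t * σ) h1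
    have h7 : t * (t * σ) = σ := by
      obtain ⟨a, b, hne, rfl⟩ := h1
      rw [← mul_assoc, swap_mul_self, one_mul]
    rw [h7] at h6
    exact ⟨⟨h1, by omega⟩, h2, by omega⟩
  · rintro ⟨⟨h1, h2⟩, h3, h4⟩
    rw [key h1]
    exact ⟨⟨h1, h3⟩, by omega⟩

noncomputable def Pser (σ : Perm (Fin n)) : PowerSeries ℚ := ∏ O ∈ orbs σ, gser O.card

theorem Pser_split {σ : Perm (Fin n)} {a : Fin n} {j : ℕ} (hj : 0 < j) (hjm : j < (orb σ a).card) :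
    Pser (swap a ((σ ^ j) a) * σ) = gser j * gser ((orb σ a).card - j) *
      ∏ O ∈ (orbs σ).erase (orb σ a), gser O.card := by
  obtain ⟨O₁, O₂, hc1, hc2, h12, h1, h2, h3⟩ := orbs_split hj hjm
  rw [Pser, h3, Finset.prod_insert, Finset.prod_insert h2, hc1, hc2, mul_assoc]
  simp only [Finset.mem_insert, not_or]; exact ⟨h12, h1⟩

theorem sum_Pser (σ : Perm (Fin n)) (a : Fin n) :
    ∑ b ∈ (orb σ a).erase a, Pser (swap a b * σ) =
      (∑ j ∈ Finset.Ico 1 (orb σ a).card, gser j * gser ((orb σ a).card - j)) *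
      ∏ O ∈ (orbs σ).erase (orb σ a), gser O.card := by
  rw [Finset.sum_mul]
  symm
  obtain ⟨hp, hinj⟩ := orb_period σ a
  refine Finset.sum_bij (fun j _ => (σ ^ j) a) ?_ ?_ ?_ ?_
  · intro j hj
    rw [Finset.mem_Ico] at hj
    rw [Finset.mem_erase, mem_orb_pow]
    refine ⟨fun h => ?_, j, rfl⟩
    have := hinj j (by omega) 0 (by omega) (by simpa using h)
    omega
  · intro i hi j hj h
    rw [Finset.mem_Ico] at hi hj
    exact hinj i hi.2 j hj.2 h
  · intro b hb
    rw [Finset.mem_erase, mem_orb] at hb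
    obtain ⟨j, h1, h2, h3⟩ := exists_pow_of_sameCycle (Ne.symm hb.1) hb.2
    exact ⟨j, Finset.mem_Ico.2 ⟨h1, h2⟩, h3⟩
  · intro j hj
    rw [Finset.mem_Ico] at hj
    rw [Pser_split (by omega) hj.2]

theorem deriv_prod' {ι : Type*} [DecidableEq ι] (s : Finset ι) (f : ι → PowerSeries ℚ) :
    PowerSeries.derivative ℚ (∏ i ∈ s, f i) =
      ∑ i ∈ s, PowerSeries.derivative ℚ (f i) * ∏ j ∈ s.erase i, f j := by
  induction s using Finset.induction_on with
  | empty => simp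
  | insert a s ha ih =>
    rw [Finset.prod_insert ha, Derivation.leibniz, ih, Finset.sum_insert ha, Finset.erase_insert ha,
      smul_eq_mul, smul_eq_mul, Finset.mul_sum, add_comm, mul_comm]
    congr 1
    apply Finset.sum_congr rfl
    intro i hi
    have hia : i ≠ a := by rintro rfl; exact ha hi
    rw [Finset.erase_insert_of_ne (Ne.symm hia), Finset.prod_insert (by simp [ha])]
    ring

theorem deriv_Pser (σ : Perm (Fin n)) :
    (2 : ℚ) • PowerSeries.derivative ℚ (Pser σ) =
      ∑ a, ∑ b ∈ (orb σ a).erase a, Pser (swap a b * σ) := by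
  simp only [sum_Pser]
  rw [← Finset.sum_fiberwise_of_maps_to (s := Finset.univ) (t := orbs σ) (g := orb σ)
    (fun x _ => mem_orbs.2 ⟨x, rfl⟩), Pser, deriv_prod', Finset.smul_sum]
  apply Finset.sum_congr rfl
  intro O hO
  have h1 : ∀ x ∈ Finset.univ.filter (fun x => orb σ x = O),
      (∑ j ∈ Finset.Ico 1 (orb σ x).card, gser j * gser ((orb σ x).card - j)) *
      ∏ O ∈ (orbs σ).erase (orb σ x), gser O.card =
      (∑ j ∈ Finset.Ico 1 O.card, gser j * gser (O.card - j)) *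
      ∏ O ∈ (orbs σ).erase O, gser O.card := by
    intro x hx
    rw [(Finset.mem_filter.1 hx).2]
  rw [Finset.sum_congr rfl h1, Finset.sum_const]
  have h2 : Finset.univ.filter (fun x => orb σ x = O) = O := by
    obtain ⟨a, rfl⟩ := mem_orbs.1 hO
    ext x
    rw [Finset.mem_filter, orb_eq_iff, mem_orb, Perm.sameCycle_comm]
    simp
  rw [h2, gser_deriv, smul_mul_assoc, smul_smul, ← Nat.cast_smul_eq_nsmul ℚ]
  congr 1
  ring

open Classical in
noncomputable def cutSet (σ : Perm (Fin n)) : Finset (Perm (Fin n)) :=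
  Finset.univ.filter fun t => t.IsSwap ∧ normPerm σ = 1 + normPerm (t * σ)

theorem mem_cutSet {σ t : Perm (Fin n)} :
    t ∈ cutSet σ ↔ t.IsSwap ∧ normPerm σ = 1 + normPerm (t * σ) := by simp [cutSet]

theorem sum_cutSet (σ : Perm (Fin n)) (h : Perm (Fin n) → PowerSeries ℚ) :
    (2 : ℚ) • ∑ t ∈ cutSet σ, h t = ∑ a, ∑ b ∈ (orb σ a).erase a, h (swap a b) := by
  have h1 : (2 : ℚ) • ∑ t ∈ cutSet σ, h t = ∑ t ∈ cutSet σ, ∑ a ∈ t.support, h t := by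
    rw [Finset.smul_sum]
    apply Finset.sum_congr rfl
    intro t ht
    rw [Finset.sum_const, Perm.card_support_eq_two.2 (mem_cutSet.1 ht).1, ← Nat.cast_smul_eq_nsmul ℚ]
    rfl
  rw [h1, Finset.sum_comm' (t' := Finset.univ) (s' := fun a => (cutSet σ).filter fun t => t a ≠ a)]
  · apply Finset.sum_congr rfl
    intro a _
    symm
    refine Finset.sum_bij (fun b _ => swap a b) ?_ ?_ ?_ ?_
    · intro b hb
      rw [Finset.mem_erase, mem_orb] at hb
      rw [Finset.mem_filter, mem_cutSet, swap_apply_left]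
      exact ⟨⟨⟨a, b, Ne.symm hb.1, rfl⟩, norm_swap_same (Ne.symm hb.1) hb.2⟩, hb.1⟩
    · intro b _ c _ hbc
      have := congrArg (fun t : Perm (Fin n) => t a) hbc
      simpa using this
    · intro t ht
      rw [Finset.mem_filter, mem_cutSet] at ht
      obtain ⟨⟨⟨x, y, hxy, rfl⟩, h2⟩, h3⟩ := ht
      have h4 := (norm_swap_iff hxy).1 h2
      by_cases hx : a = x
      · subst hx
        exact ⟨y, Finset.mem_erase.2 ⟨Ne.symm hxy, mem_orb.2 h4⟩, rfl⟩
      by_cases hy : a = y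
      · subst hy
        exact ⟨x, Finset.mem_erase.2 ⟨hxy, mem_orb.2 h4.symm⟩, swap_comm _ _⟩
      exact absurd (swap_apply_of_ne_of_ne hx hy) h3
    · intro b _; rfl
  · intro t a
    simp [Finset.mem_filter]

theorem deriv_Pser_cut (σ : Perm (Fin n)) :
    PowerSeries.derivative ℚ (Pser σ) = ∑ t ∈ cutSet σ, Pser (t * σ) := by
  have := sum_cutSet σ (fun t => Pser (t * σ))
  rw [← deriv_Pser] at this
  exact (smul_right_injective _ (two_ne_zero) this).symm

open Classical in
theorem card_GSet_succ (σ : Perm (Fin n)) (k : ℕ) :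
    (Finset.univ.filter (· ∈ GSet σ (k+1))).card =
      ∑ t ∈ cutSet σ, (Finset.univ.filter (· ∈ GSet (t * σ) k)).card := by
  rw [← Finset.card_sigma]
  refine Finset.card_bij' (fun τ _ => ⟨τ 0, Fin.tail τ⟩) (fun p _ => Fin.cons p.1 p.2) ?_ ?_ ?_ ?_
  · intro τ hτ
    rw [Finset.mem_filter, ← Fin.cons_self_tail τ, GSet_cons] at hτ
    simp only [Finset.mem_sigma, mem_cutSet, Finset.mem_filter, Finset.mem_univ, true_and]
    exact hτ.2
  · intro p hp
    simp only [Finset.mem_sigma, mem_cutSet, Finset.mem_filter, Finset.mem_univ, true_and] at hp ⊢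
    exact (GSet_cons _ _ _ _).2 hp
  · intro τ _; exact Fin.cons_self_tail τ
  · intro p _; simp

open Classical in
theorem card_GSet (σ : Perm (Fin n)) (k : ℕ) :
    ((Finset.univ.filter (· ∈ GSet σ k)).card : ℚ) =
      PowerSeries.constantCoeff ((PowerSeries.derivative ℚ)^[k] (Pser σ)) := by
  induction k generalizing σ with
  | zero =>
    have : (Finset.univ.filter (· ∈ GSet σ 0)) = Finset.univ := by
      ext τ; simp [GSet]
    rw [this, Function.iterate_zero, id, Pser, map_prod, Finset.prod_eq_one]
    · simp
    · intro O hO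
      obtain ⟨x, rfl⟩ := mem_orbs.1 hO
      rw [gser_const, if_neg (orb_card_pos σ x).ne']
  | succ k ih =>
    rw [card_GSet_succ, Function.iterate_succ_apply, deriv_Pser_cut]
    have hsum : ∀ (s : Finset (Perm (Fin n))) (f : Perm (Fin n) → PowerSeries ℚ),
        (PowerSeries.derivative ℚ)^[k] (∑ t ∈ s, f t) = ∑ t ∈ s, (PowerSeries.derivative ℚ)^[k] (f t) := by
      intro s f
      clear ih
      induction k with
      | zero => rfl
      | succ k ih => simp only [Function.iterate_succ_apply', ih, map_sum]
    rw [hsum, map_sum]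
    push_cast
    exact Finset.sum_congr rfl fun t _ => ih (t * σ)

theorem orb_finRotate (x : Fin n) : orb (finRotate n) x = Finset.univ := by
  ext y
  simp only [Finset.mem_univ, iff_true, mem_orb]
  rcases Nat.lt_or_ge n 2 with h | h
  · have : x = y := by ext; omega
    exact this.sameCycle _
  · have hs := support_finRotate_of_le h
    exact (isCycle_finRotate_of_le h).sameCycle
      (Perm.mem_support.1 (hs ▸ Finset.mem_univ x)) (Perm.mem_support.1 (hs ▸ Finset.mem_univ y))

theorem Pser_finRotate (hn : 1 ≤ n) : Pser (finRotate n) = gser n := by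
  have : orbs (finRotate n) = {Finset.univ} := by
    ext O
    rw [mem_orbs, Finset.mem_singleton]
    constructor
    · rintro ⟨x, rfl⟩; exact orb_finRotate x
    · rintro rfl; exact ⟨⟨0, hn⟩, orb_finRotate _⟩
  rw [Pser, this, Finset.prod_singleton, Finset.card_univ, Fintype.card_fin]

end combi

/-- For every n ≥ 1 and k ≥ 1, Σ_n(k) is finite with cardinality n^{k−1}·C(n,k+1). -/
theorem stmt0 (n k : ℕ) (hn : 1 ≤ n) (hk : 1 ≤ k) :
    (SigmaSet n k).Finite ∧
      (SigmaSet n k).ncard = n ^ (k - 1) * Nat.choose n (k + 1) := by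
  classical
  refine ⟨Set.toFinite _, ?_⟩
  have h := card_GSet (finRotate n) k
  rw [Pser_finRotate hn, gser_final n k hn hk] at h
  have h2 : (SigmaSet n k).ncard = (Finset.univ.filter (· ∈ GSet (finRotate n) k)).card := by
    rw [SigmaSet_eq, ← Set.ncard_coe_finset]
    congr 1
    ext; simp
  rw [h2]
  exact_mod_cast h
end

section
/- Let ((i₁ j₁),…,(i_k j_k)) ∈ T_n^k be a tuple of transpositions (with i_l < j_l for each l) such that i₁ ≤ ⋯ ≤ i_k. Then the following are equivalent: (1) ((i₁ j₁),…,(i_k j_k)) ∈ Σ_n(k); (2) for all l, m ∈ {1,…,k} with l < m, either j_l ≤ i_m or j_l > j_m. -/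
open Equiv Equiv.Perm in
lemma aux_sc_of_step {n : ℕ} (π : Equiv.Perm (Fin n)) (S : Fin n → Fin n → Prop)
    (hr : ∀ x, S x x) (ht : ∀ x y z, S x y → S y z → S x z)
    (hs : ∀ x, S x (π x)) {x y : Fin n} (h : π.SameCycle x y) : S x y := by
  obtain ⟨m, -, -, rfl⟩ := h.exists_pow_eq
  induction m with
  | zero => simpa using hr x
  | succ m ih =>
    rw [pow_succ', Equiv.Perm.mul_apply]
    exact ht _ _ _ (ih ⟨m, by simp⟩) (hs _)

lemma aux_split {n : ℕ} (π : Equiv.Perm (Fin n)) (a b : Fin n) (hab : a ≠ b) :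
    (π.SameCycle a b → ¬ (Equiv.swap a b * π).SameCycle a b) ∧
    (¬ π.SameCycle a b → (Equiv.swap a b * π).SameCycle a b) := by
  have hex : ∃ m : ℕ, 0 < m ∧ ((π ^ m) a = a ∨ (π ^ m) a = b) :=
    ⟨orderOf π, orderOf_pos π, by simp [pow_orderOf_eq_one]⟩
  classical
  obtain ⟨m, ⟨hm0, hm⟩, hmin⟩ : ∃ m : ℕ, (0 < m ∧ ((π ^ m) a = a ∨ (π ^ m) a = b)) ∧
      ∀ t < m, ¬ (0 < t ∧ ((π ^ t) a = a ∨ (π ^ t) a = b)) :=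
    ⟨Nat.find hex, Nat.find_spec hex, fun t ht => Nat.find_min hex ht⟩
  constructor
  · intro h
    have hmb : (π ^ m) a = b := by
      rcases hm with hm | hm
      · exfalso
        obtain ⟨t, -, -, ht⟩ := h.exists_pow_eq
        have h1 : (π ^ (t % m)) a = b := by
          rw [← ht]
          conv_rhs => rw [← Nat.mod_add_div t m, pow_add, Equiv.Perm.mul_apply, pow_mul]
          congr 1
          symm
          exact Equiv.Perm.pow_apply_eq_self_of_apply_eq_self hm _
        rcases Nat.eq_zero_or_pos (t % m) with h0 | h0
        · rw [h0] at h1; exact hab (by simpa using h1)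
        · exact hmin _ (Nat.mod_lt _ hm0) ⟨h0, Or.inr h1⟩
      · exact hm
    intro h'
    have key : ∀ t : ℕ, ∃ u < m, ((Equiv.swap a b * π) ^ t) a = (π ^ u) a := by
      intro t
      induction t with
      | zero => exact ⟨0, hm0, by simp⟩
      | succ t ih =>
        obtain ⟨u, hu, e⟩ := ih
        rw [pow_succ', Equiv.Perm.mul_apply, e, Equiv.Perm.mul_apply,
          ← Equiv.Perm.mul_apply π, ← pow_succ']
        by_cases hum : u + 1 = m
        · exact ⟨0, hm0, by rw [hum, hmb]; simp⟩
        · refine ⟨u + 1, by omega, ?_⟩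
          have := hmin (u + 1) (by omega)
          push Not at this
          have := this (by omega)
          exact Equiv.swap_apply_of_ne_of_ne this.1 this.2
    obtain ⟨t, -, -, ht⟩ := h'.exists_pow_eq
    obtain ⟨u, hu, e⟩ := key t
    rw [ht] at e
    rcases Nat.eq_zero_or_pos u with h0 | h0
    · rw [h0] at e; exact hab (by simpa using e.symm)
    · exact hmin u hu ⟨h0, Or.inr e.symm⟩
  · intro h
    have hma : (π ^ m) a = a := by
      rcases hm with hm | hm
      · exact hm
      · exact absurd ⟨(m : ℤ), by simpa using hm⟩ h
    have key : ∀ t : ℕ, t < m → ((Equiv.swap a b * π) ^ t) a = (π ^ t) a := by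
      intro t
      induction t with
      | zero => simp
      | succ t ih =>
        intro ht
        rw [pow_succ', Equiv.Perm.mul_apply, ih (by omega), Equiv.Perm.mul_apply,
          ← Equiv.Perm.mul_apply π, ← pow_succ']
        have := hmin (t + 1) (by omega)
        push Not at this
        have := this (by omega)
        exact Equiv.swap_apply_of_ne_of_ne this.1 this.2
    obtain ⟨p, rfl⟩ : ∃ p, m = p + 1 := ⟨m - 1, by omega⟩
    have : ((Equiv.swap a b * π) ^ (p + 1)) a = b := by
      rw [pow_succ', Equiv.Perm.mul_apply, key p (by omega), Equiv.Perm.mul_apply,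
          ← Equiv.Perm.mul_apply π, ← pow_succ', hma]
      simp
    exact ⟨((p + 1 : ℕ) : ℤ), by rw [zpow_natCast]; exact this⟩

lemma aux_min {n : ℕ} (π : Equiv.Perm (Fin n)) (a : Fin n) :
    ∃ p, π.SameCycle a p ∧ ∀ y, π.SameCycle a y → p ≤ y := by
  classical
  obtain ⟨p, hp, hm⟩ := Set.exists_min_image {y | π.SameCycle a y} id (Set.toFinite _)
    ⟨a, Equiv.Perm.SameCycle.refl π a⟩
  exact ⟨p, hp, hm⟩

/-- counting lemma: merging the two distinct classes of `a` and `b`. -/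
lemma aux_merge_count {n : ℕ} (ρ π : Equiv.Perm (Fin n)) (a b : Fin n)
    (hn : ¬ ρ.SameCycle a b)
    (h : ∀ x y, π.SameCycle x y ↔ (ρ.SameCycle x y ∨
      ((ρ.SameCycle a x ∨ ρ.SameCycle b x) ∧ (ρ.SameCycle a y ∨ ρ.SameCycle b y)))) :
    cycleCount ρ = cycleCount π + 1 := by
  obtain ⟨p, hp, hpm⟩ := aux_min ρ a
  obtain ⟨q, hq, hqm⟩ := aux_min ρ b
  have hpq : p ≠ q := by
    rintro rfl
    exact hn (hp.trans hq.symm)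
  wlog hlt : p < q generalizing a b p q
  · refine this b a (fun h => hn h.symm) ?_ q hq hqm p hp hpm hpq.symm
      (lt_of_le_of_ne (not_lt.mp hlt) hpq.symm)
    intro x y
    rw [h]
    tauto
  have hset : {x : Fin n | ∀ y, π.SameCycle x y → x ≤ y} =
      {x : Fin n | ∀ y, ρ.SameCycle x y → x ≤ y} \ {q} := by
    ext x
    simp only [Set.mem_setOf_eq, Set.mem_diff, Set.mem_singleton_iff]
    constructor
    · intro hx
      refine ⟨fun y hy => hx y ((h x y).2 (Or.inl hy)), ?_⟩
      rintro rfl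
      exact absurd (hx p ((h x p).2 (Or.inr ⟨Or.inr hq, Or.inl hp⟩))) (not_le.mpr hlt)
    · rintro ⟨hx, hxq⟩ y hy
      rcases (h x y).1 hy with hy | ⟨hx1 | hx1, hy1⟩
      · exact hx y hy
      · have hxp : x = p := le_antisymm (hx p (hx1.symm.trans hp)) (hpm x hx1)
        subst hxp
        rcases hy1 with hy1 | hy1
        · exact hpm y hy1
        · exact hlt.le.trans (hqm y hy1)
      · exact absurd (le_antisymm (hx q (hx1.symm.trans hq)) (hqm x hx1)) hxq
  have hqmem : q ∈ {x : Fin n | ∀ y, ρ.SameCycle x y → x ≤ y} :=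
    fun y hy => hqm y (hq.trans hy)
  unfold cycleCount
  rw [hset, Set.ncard_diff_singleton_add_one hqmem (Set.toFinite _)]

lemma aux_count_split' {n : ℕ} (π : Equiv.Perm (Fin n)) (a b : Fin n)
    (h : π.SameCycle a b) (h' : ¬ (Equiv.swap a b * π).SameCycle a b) :
    cycleCount (Equiv.swap a b * π) = cycleCount π + 1 := by
  set ρ := Equiv.swap a b * π with hρ
  have hπ : ∀ x, π x = Equiv.swap a b (ρ x) := by intro x; simp [hρ]
  have hsw : ∀ z, (Equiv.swap a b z = z) ∨ (z = a ∧ Equiv.swap a b z = b) ∨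
      (z = b ∧ Equiv.swap a b z = a) := by
    intro z
    by_cases h1 : z = a
    · subst h1; simp
    by_cases h2 : z = b
    · subst h2; simp
    exact Or.inl (Equiv.swap_apply_of_ne_of_ne h1 h2)
  have hle : ∀ x y, ρ.SameCycle x y → π.SameCycle x y := by
    intro x y hxy
    refine aux_sc_of_step ρ π.SameCycle (fun x => Equiv.Perm.SameCycle.refl _ _)
      (fun x y z h1 h2 => h1.trans h2) ?_ hxy
    intro x
    have hx : π.SameCycle x (π x) := ⟨1, by simp⟩
    rw [hρ, Equiv.Perm.mul_apply]
    rcases hsw (π x) with e | ⟨e1, e2⟩ | ⟨e1, e2⟩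
    · rwa [e]
    · rw [e2]; rw [e1] at hx; exact hx.trans h
    · rw [e2]; rw [e1] at hx; exact hx.trans h.symm
  apply aux_merge_count ρ π a b h'
  intro x y
  constructor
  · intro hxy
    refine aux_sc_of_step π (fun x y => ρ.SameCycle x y ∨
      ((ρ.SameCycle a x ∨ ρ.SameCycle b x) ∧ (ρ.SameCycle a y ∨ ρ.SameCycle b y)))
      (fun x => Or.inl (Equiv.Perm.SameCycle.refl _ _)) ?_ ?_ hxy
    · rintro x y z (h1 | ⟨h1, h2⟩) (h3 | ⟨h3, h4⟩)
      · exact Or.inl (h1.trans h3)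
      · refine Or.inr ⟨?_, h4⟩
        rcases h3 with h3 | h3
        · exact Or.inl (h3.trans h1.symm)
        · exact Or.inr (h3.trans h1.symm)
      · refine Or.inr ⟨h1, ?_⟩
        rcases h2 with h2 | h2
        · exact Or.inl (h2.trans h3)
        · exact Or.inr (h2.trans h3)
      · exact Or.inr ⟨h1, h4⟩
    · intro x
      have hx : ρ.SameCycle x (ρ x) := ⟨1, by simp⟩
      rw [hπ]
      rcases hsw (ρ x) with e | ⟨e1, e2⟩ | ⟨e1, e2⟩
      · rw [e]; exact Or.inl hx
      · rw [e2]; rw [e1] at hx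
        exact Or.inr ⟨Or.inl hx.symm, Or.inr (Equiv.Perm.SameCycle.refl _ _)⟩
      · rw [e2]; rw [e1] at hx
        exact Or.inr ⟨Or.inr hx.symm, Or.inl (Equiv.Perm.SameCycle.refl _ _)⟩
  · rintro (h1 | ⟨h1, h2⟩)
    · exact hle _ _ h1
    · have hx : π.SameCycle a x := by
        rcases h1 with h1 | h1
        · exact hle _ _ h1
        · exact h.trans (hle _ _ h1)
      have hy : π.SameCycle a y := by
        rcases h2 with h1 | h1
        · exact hle _ _ h1
        · exact h.trans (hle _ _ h1)
      exact hx.symm.trans hy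

lemma aux_count_split {n : ℕ} (π : Equiv.Perm (Fin n)) (a b : Fin n) (hab : a ≠ b)
    (h : π.SameCycle a b) : cycleCount (Equiv.swap a b * π) = cycleCount π + 1 :=
  aux_count_split' π a b h ((aux_split π a b hab).1 h)

lemma aux_count_merge {n : ℕ} (π : Equiv.Perm (Fin n)) (a b : Fin n) (hab : a ≠ b)
    (h : ¬ π.SameCycle a b) : cycleCount (Equiv.swap a b * π) + 1 = cycleCount π := by
  have h2 := (aux_split π a b hab).2 h
  have := aux_count_split (Equiv.swap a b * π) a b hab h2
  rw [← mul_assoc, Equiv.swap_mul_self, one_mul] at this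
  exact this.symm

lemma aux_count_le {n : ℕ} (π : Equiv.Perm (Fin n)) : cycleCount π ≤ n := by
  unfold cycleCount
  have := Set.ncard_le_card {x : Fin n | ∀ y, π.SameCycle x y → x ≤ y}
  simpa using this

lemma aux_norm_one {n : ℕ} : normPerm (1 : Equiv.Perm (Fin n)) = 0 := by
  unfold normPerm cycleCount
  have : {x : Fin n | ∀ y, (1 : Equiv.Perm (Fin n)).SameCycle x y → x ≤ y} = Set.univ := by
    ext x
    simp only [Set.mem_setOf_eq, Set.mem_univ, iff_true]
    intro y hy
    rw [Equiv.Perm.sameCycle_one] at hy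
    exact hy.le
  rw [this, Set.ncard_univ]
  simp

lemma aux_norm_swap_le {n : ℕ} (π : Equiv.Perm (Fin n)) (a b : Fin n) (hab : a ≠ b) :
    normPerm (Equiv.swap a b * π) ≤ normPerm π + 1 := by
  unfold normPerm
  by_cases h : π.SameCycle a b
  · have := aux_count_split π a b hab h; omega
  · have := aux_count_merge π a b hab h; omega

lemma aux_triangle {n : ℕ} (ρ : Equiv.Perm (Fin n)) : ∀ (N : ℕ) (σ : Equiv.Perm (Fin n)),
    normPerm σ ≤ N → normPerm (σ * ρ) ≤ normPerm σ + normPerm ρ := by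
  intro N
  induction N with
  | zero =>
    intro σ hσ
    by_cases h1 : σ = 1
    · subst h1; simp
    · exfalso
      obtain ⟨a, ha⟩ : ∃ a, σ a ≠ a := by
        by_contra hc; push Not at hc; exact h1 (Equiv.ext hc)
      have := aux_count_split σ a (σ a) ha.symm ⟨1, by simp⟩
      have h3 := aux_count_le (Equiv.swap a (σ a) * σ)
      unfold normPerm at hσ
      omega
  | succ N ih =>
    intro σ hσ
    by_cases h1 : σ = 1
    · subst h1; simp
    · obtain ⟨a, ha⟩ : ∃ a, σ a ≠ a := by
        by_contra hc; push Not at hc; exact h1 (Equiv.ext hc)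
      have := aux_count_split σ a (σ a) ha.symm ⟨1, by simp⟩
      have h3 := aux_count_le (Equiv.swap a (σ a) * σ)
      have h4 : normPerm (Equiv.swap a (σ a) * σ) + 1 = normPerm σ := by
        unfold normPerm; omega
      have h5 := ih (Equiv.swap a (σ a) * σ) (by omega)
      have h6 := aux_norm_swap_le (Equiv.swap a (σ a) * σ * ρ) a (σ a) ha.symm
      rw [mul_assoc, ← mul_assoc _ _ (σ * ρ), Equiv.swap_mul_self, one_mul] at h6
      rw [mul_assoc] at h5
      omega

/-- `π` is the cyclic successor map on each class of `r`. -/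
def auxSucc {n : ℕ} (π : Equiv.Perm (Fin n)) (r : Fin n → Fin n → Prop) : Prop :=
  ∀ x, r x (π x) ∧ ∀ y, r x y → (x < y → x < π x ∧ π x ≤ y) ∧ (π x ≤ x → π x ≤ y)

lemma aux_succ_iff {n : ℕ} (π : Equiv.Perm (Fin n)) (r : Fin n → Fin n → Prop)
    (hr : Equivalence r) (h : auxSucc π r) (x y : Fin n) : π.SameCycle x y ↔ r x y := by
  constructor
  · exact aux_sc_of_step π r hr.refl (fun _ _ _ h1 h2 => hr.trans h1 h2) (fun x => (h x).1)
  · have key : ∀ N : ℕ, ∀ x y : Fin n, (y : ℕ) - x ≤ N → x ≤ y → r x y → π.SameCycle x y := by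
      intro N
      induction N with
      | zero =>
        intro x y h1 h2 _
        have : x = y := by apply Fin.ext; have : (x : ℕ) ≤ y := h2; omega
        subst this; exact Equiv.Perm.SameCycle.refl _ _
      | succ N ih =>
        intro x y h1 h2 h3
        rcases h2.eq_or_lt with rfl | h2
        · exact Equiv.Perm.SameCycle.refl _ _
        · obtain ⟨h4, h5⟩ := ((h x).2 y h3).1 h2
          have h6 := ih (π x) y (by
            have : (x : ℕ) < π x := h4
            have : (x : ℕ) < y := h2
            omega) h5 (hr.trans (hr.symm (h x).1) h3)
          exact Equiv.Perm.SameCycle.trans ⟨1, by simp⟩ h6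
    intro hxy
    rcases le_total x y with hl | hl
    · exact key _ x y le_rfl hl hxy
    · exact (key _ y x le_rfl hl (hr.symm hxy)).symm

lemma aux_succ_step {n : ℕ} (π : Equiv.Perm (Fin n)) (r : Fin n → Fin n → Prop)
    (hr : Equivalence r) (h : auxSucc π r) (a b : Fin n) (hab : a < b) (hrab : r a b)
    (H : ∀ x, a ≤ x → x < b → r a x) :
    auxSucc (Equiv.swap a b * π) (fun x y => r x y ∧ ((a ≤ x ∧ x < b) ↔ (a ≤ y ∧ y < b))) := by
  intro x
  obtain ⟨h1, h2⟩ := h x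
  rw [Equiv.Perm.mul_apply]
  have hxa : r a x → r x a := hr.symm
  have hxb : r a x → r x b := fun h => hr.trans (hr.symm h) hrab
  have hxπ : r a (π x) → r a x := fun h => hr.trans h (hr.symm h1)
  have hHx := H x
  have hHπ := H (π x)
  have h2a := h2 a
  have h2b := h2 b
  have haa := hr.refl a
  by_cases e1 : π x = a
  · rw [e1, Equiv.swap_apply_left]
    rw [e1] at h1 h2 h2a h2b hxπ
    refine ⟨⟨hr.trans h1 hrab, ?_⟩, ?_⟩
    · grind
    · rintro y ⟨hy, hy2⟩
      have := h2 y hy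
      grind
  by_cases e2 : π x = b
  · rw [e2, Equiv.swap_apply_right]
    rw [e2] at h1 h2 h2a h2b hxπ
    refine ⟨⟨hr.trans h1 (hr.symm hrab), ?_⟩, ?_⟩
    · grind
    · rintro y ⟨hy, hy2⟩
      have := h2 y hy
      grind
  · rw [Equiv.swap_apply_of_ne_of_ne e1 e2]
    refine ⟨⟨h1, ?_⟩, ?_⟩
    · grind
    · rintro y ⟨hy, hy2⟩
      exact h2 y hy

/-- interval relation -/
def auxRel {n k : ℕ} (i j : Fin k → Fin n) (m : ℕ) (x y : Fin n) : Prop :=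
  ∀ l : Fin k, (l : ℕ) < m → ((i l ≤ x ∧ x < j l) ↔ (i l ≤ y ∧ y < j l))

lemma auxRel_equiv {n k : ℕ} (i j : Fin k → Fin n) (m : ℕ) : Equivalence (auxRel i j m) :=
  ⟨fun _ _ _ => Iff.rfl, fun h l hl => (h l hl).symm,
    fun h1 h2 l hl => (h1 l hl).trans (h2 l hl)⟩

lemma aux_rot_succ {n : ℕ} : auxSucc (finRotate (n + 1)) (fun _ _ => True) := by
  intro x
  refine ⟨trivial, fun y _ => ?_⟩
  rcases Fin.eq_castSucc_or_eq_last x with ⟨x, rfl⟩ | rfl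
  · have : finRotate (n + 1) x.castSucc = x.succ := by simp
    rw [this]
    refine ⟨fun h => ⟨Fin.castSucc_lt_succ, h⟩, fun h => ?_⟩
    exact absurd h (not_le.mpr Fin.castSucc_lt_succ)
  · rw [finRotate_last]
    exact ⟨fun h => absurd h (not_lt.mpr (Fin.le_last y)), fun _ => Fin.zero_le _⟩

lemma aux_rot_count {n : ℕ} : cycleCount (finRotate (n + 1)) = 1 := by
  unfold cycleCount
  rw [Set.ncard_eq_one]
  refine ⟨0, ?_⟩
  ext x
  simp only [Set.mem_setOf_eq, Set.mem_singleton_iff]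
  constructor
  · intro h
    exact le_antisymm (h 0 ((aux_succ_iff _ _ ⟨fun _ => trivial, fun _ => trivial,
      fun _ _ => trivial⟩ aux_rot_succ x 0).2 trivial)) (Fin.zero_le _)
  · rintro rfl y _
    exact Fin.zero_le _

lemma aux_gamma_succ {n k : ℕ} (τ : Fin k → Equiv.Perm (Fin n)) (m : Fin k) :
    gammaP τ (m + 1) = gammaP τ m * τ m := by
  unfold gammaP
  rw [List.prod_take_succ _ _ (by simp)]
  simp

lemma aux_gamma_norm {n k : ℕ} (i j : Fin k → Fin n) (hij : ∀ l, i l < j l) (m : ℕ)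
    (hm : m ≤ k) : normPerm (gammaP (fun l => Equiv.swap (i l) (j l)) m)⁻¹ ≤ m := by
  induction m with
  | zero => simp [gammaP, aux_norm_one]
  | succ m ih =>
    have := aux_gamma_succ (fun l => Equiv.swap (i l) (j l)) ⟨m, hm⟩
    simp only at this
    rw [this, mul_inv_rev, Equiv.swap_inv]
    exact (aux_norm_swap_le _ _ _ (hij _).ne).trans (by have := ih (by omega); omega)

lemma aux_norm_inv {n : ℕ} (σ : Equiv.Perm (Fin n)) : normPerm σ⁻¹ = normPerm σ := by
  unfold normPerm cycleCount
  simp [Equiv.Perm.sameCycle_inv]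

lemma aux_cond {n k : ℕ} (i j : Fin k → Fin n) (hij : ∀ l, i l < j l)
    (hmono : Monotone i) (m : Fin k) :
    auxRel i j m (i m) (j m) ↔ ∀ l, l < m → (j l ≤ i m ∨ j m < j l) := by
  unfold auxRel
  refine forall_congr' fun l => ?_
  refine forall_congr' fun hl => ?_
  have h1 : i l ≤ i m := hmono (le_of_lt hl)
  have h2 := hij m
  grind

lemma aux_main {n k : ℕ} (i j : Fin k → Fin (n + 1)) (hij : ∀ l, i l < j l)
    (hmono : Monotone i) (m : ℕ) (hm : m ≤ k)
    (h : ∀ l : Fin k, (l : ℕ) < m → auxRel i j l (i l) (j l)) :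
    auxSucc ((gammaP (fun l => Equiv.swap (i l) (j l)) m)⁻¹ * finRotate (n + 1))
      (auxRel i j m) := by
  induction m with
  | zero =>
    have : auxRel i j 0 = fun _ _ => True := by
      ext x y; simp [auxRel]
    rw [this]
    simpa [gammaP] using aux_rot_succ
  | succ m ih =>
    have e := aux_gamma_succ (fun l => Equiv.swap (i l) (j l)) ⟨m, hm⟩
    simp only at e
    rw [e, mul_inv_rev, Equiv.swap_inv, mul_assoc]
    have hr := h ⟨m, hm⟩ (Nat.lt_succ_self m)
    have := aux_succ_step _ _ (auxRel_equiv i j m)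
      (ih (by omega) (fun l hl => h l (by omega))) (i ⟨m, hm⟩) (j ⟨m, hm⟩) (hij _) hr ?_
    · convert this using 1
      ext x y
      constructor
      · intro hxy
        exact ⟨fun l hl => hxy l (by omega), hxy ⟨m, hm⟩ (Nat.lt_succ_self m)⟩
      · rintro ⟨h1, h2⟩ l hl
        rcases Nat.lt_succ_iff_lt_or_eq.mp hl with h3 | h3
        · exact h1 l h3
        · have : l = ⟨m, hm⟩ := Fin.ext h3
          rw [this]; exact h2
    · intro x hx1 hx2 l hl
      have h1 : i l ≤ i ⟨m, hm⟩ := hmono (show (l : ℕ) ≤ m from hl.le)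
      have h2 := hr l hl
      have h3 := hij ⟨m, hm⟩
      grind

lemma aux_same {n k : ℕ} (i j : Fin k → Fin (n + 1)) (hij : ∀ l, i l < j l)
    (hmono : Monotone i) :
    (∀ m : Fin k, ((gammaP (fun l => Equiv.swap (i l) (j l)) m)⁻¹ *
      finRotate (n + 1)).SameCycle (i m) (j m)) ↔ ∀ m : Fin k, auxRel i j m (i m) (j m) := by
  constructor
  · intro h
    have : ∀ N : ℕ, ∀ m : Fin k, (m : ℕ) < N → auxRel i j m (i m) (j m) := by
      intro N
      induction N with
      | zero => intro m hm; omega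
      | succ N ih =>
        intro m hm
        exact (aux_succ_iff _ _ (auxRel_equiv i j m) (aux_main i j hij hmono m m.2.le
          (fun l hl => ih l (by omega))) _ _).1 (h m)
    exact fun m => this _ m (Nat.lt_succ_self _)
  · intro h m
    exact (aux_succ_iff _ _ (auxRel_equiv i j m) (aux_main i j hij hmono m m.2.le
          (fun l hl => h l)) _ _).2 (h m)

lemma aux_count_iff {n k : ℕ} (i j : Fin k → Fin (n + 1)) (hij : ∀ l, i l < j l) :
    (∀ m : Fin k, ((gammaP (fun l => Equiv.swap (i l) (j l)) m)⁻¹ *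
      finRotate (n + 1)).SameCycle (i m) (j m)) ↔
    cycleCount ((gammaP (fun l => Equiv.swap (i l) (j l)) k)⁻¹ * finRotate (n + 1)) = k + 1 := by
  set f : ℕ → Equiv.Perm (Fin (n + 1)) := fun m =>
    (gammaP (fun l => Equiv.swap (i l) (j l)) m)⁻¹ * finRotate (n + 1) with hf
  have h0 : cycleCount (f 0) = 1 := by simp [hf, gammaP, aux_rot_count]
  have hs : ∀ m : Fin k, f (m + 1) = Equiv.swap (i m) (j m) * f m := by
    intro m
    have e := aux_gamma_succ (fun l => Equiv.swap (i l) (j l)) m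
    try simp only at e
    simp only [hf]
    rw [e, mul_inv_rev, Equiv.swap_inv, mul_assoc]
  have h1 : ∀ m : Fin k, (f m).SameCycle (i m) (j m) →
      cycleCount (f (m + 1)) = cycleCount (f m) + 1 := fun m h => by
    rw [hs]; exact aux_count_split _ _ _ (hij m).ne h
  have h2 : ∀ m : Fin k, ¬ (f m).SameCycle (i m) (j m) →
      cycleCount (f (m + 1)) + 1 = cycleCount (f m) := fun m h => by
    rw [hs]; exact aux_count_merge _ _ _ (hij m).ne h
  change (∀ m : Fin k, (f m).SameCycle (i m) (j m)) ↔ cycleCount (f k) = k + 1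
  constructor
  · intro h
    have : ∀ m : ℕ, m ≤ k → cycleCount (f m) = m + 1 := by
      intro m
      induction m with
      | zero => intro _; exact h0
      | succ m ih =>
        intro hm
        have e := h1 ⟨m, hm⟩ (h _)
        simp only at e
        rw [e, ih (by omega)]
    exact this k le_rfl
  · intro hk m0
    by_contra hc
    have : ∀ m : ℕ, m ≤ k → cycleCount (f m) ≤ m + 1 ∧
        ((m0 : ℕ) < m → cycleCount (f m) ≤ m) := by
      intro m
      induction m with
      | zero => intro _; exact ⟨h0.le, fun h => by omega⟩
      | succ m ih =>
        intro hm
        obtain ⟨ih1, ih2⟩ := ih (by omega)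
        by_cases e : (m0 : ℕ) = m
        · have := h2 m0 hc
          rw [e] at this
          omega
        · by_cases hc2 : (f m).SameCycle (i ⟨m, hm⟩) (j ⟨m, hm⟩)
          · have := h1 ⟨m, hm⟩ hc2
            simp only at this
            omega
          · have := h2 ⟨m, hm⟩ hc2
            simp only at this
            omega
    have := (this k le_rfl).2 m0.2
    omega

/-- For a tuple of transpositions ((i₁ j₁),…,(i_k j_k)) with i₁ ≤ ⋯ ≤ i_k, membership in
Σ_n(k) is equivalent to: for all l < m, either j_l ≤ i_m or j_l > j_m. -/
theorem stmt14 (n k : ℕ) (i j : Fin k → Fin n) (hij : ∀ l, i l < j l)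
    (hmono : Monotone i) :
    ((fun l => Equiv.swap (i l) (j l)) ∈ SigmaSet n k) ↔
      ∀ l m : Fin k, l < m → (j l ≤ i m ∨ j m < j l) := by
  rcases n with _ | n
  · have hk : k = 0 := by
      rcases k with _ | k
      · rfl
      · exact (i 0).elim0
    subst hk
    refine iff_of_true ⟨fun l => l.elim0, ?_, ?_⟩ (fun l => l.elim0)
    · simp [normPerm]
    · simp [precLe, normPerm]
  have hR : (∀ l m : Fin k, l < m → (j l ≤ i m ∨ j m < j l)) ↔
      cycleCount ((gammaP (fun l => Equiv.swap (i l) (j l)) k)⁻¹ * finRotate (n + 1)) = k + 1 := by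
    rw [← aux_count_iff i j hij, aux_same i j hij hmono]
    simp only [aux_cond i j hij hmono]
    exact forall_comm
  rw [hR]
  have hg : gammaP (fun l => Equiv.swap (i l) (j l)) k =
      (List.ofFn (fun l => Equiv.swap (i l) (j l))).prod := by
    unfold gammaP
    rw [List.take_of_length_le (by simp)]
  have hnorm := aux_gamma_norm i j hij k le_rfl
  rw [aux_norm_inv] at hnorm
  rw [hg] at hnorm ⊢
  set γ := (List.ofFn (fun l => Equiv.swap (i l) (j l))).prod with hγ
  have hc : normPerm (finRotate (n + 1)) = n := by
    unfold normPerm; rw [aux_rot_count]; omega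
  have hle := aux_count_le (γ⁻¹ * finRotate (n + 1))
  have htri := aux_triangle (γ⁻¹ * finRotate (n + 1)) _ γ le_rfl
  rw [mul_inv_cancel_left, hc] at htri
  have hd : normPerm (γ⁻¹ * finRotate (n + 1)) =
    n + 1 - cycleCount (γ⁻¹ * finRotate (n + 1)) := rfl
  constructor
  · rintro ⟨-, h1, h2⟩
    unfold precLe at h2
    rw [← hγ] at h1 h2
    rw [hc] at h2
    omega
  · intro h
    refine ⟨fun l => ⟨i l, j l, (hij l).ne, rfl⟩, ?_, ?_⟩
    · rw [← hγ]; omega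
    · unfold precLe
      rw [← hγ, hc]
      omega
end

section
/- There exists a group action • of the symmetric group S_k on the set Σ_n(k) such that: (1) for every Coxeter generator σ_l = (l, l+1) with l ∈ {1,…,k−1} and every γ ∈ Σ_n(k), σ_l • γ = s_l(γ); (2) the map P is equivariant: for every π ∈ S_k and γ ∈ Σ_n(k), P(π • γ) = π · P(γ); (3) P preserves stabilisers: for every π ∈ S_k and γ ∈ Σ_n(k), π • γ = γ if and only if π · P(γ) = P(γ). -/
/-- The intrinsic form of the operation s_l at consecutive positions a, b = a+1 of a chain of
transpositions: for a transposition written (i j) with i < j, the smaller entry i is the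
minimum of its support, so the case distinction on i_a vs i_b is made by comparing the
minima of the supports. -/
def slGen {n k : ℕ} (γ : Fin k → Equiv.Perm (Fin n)) (a b : Fin k) :
    Fin k → Equiv.Perm (Fin n) :=
  fun m =>
    if (γ a).support.min = (γ b).support.min then γ m
    else if (γ a).support.min < (γ b).support.min then
      if m = a then γ b else if m = b then γ b * γ a * γ b else γ m
    else
      if m = a then γ a * γ b * γ a else if m = b then γ a else γ m

/-- P : Σ_n(k) → {1,…,n}^k, sending ((i₁ j₁),…,(i_k j_k)) to (i₁,…,i_k); for a transposition
(i j) with i < j, i is the minimum of the support. -/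
def Pmap {n k : ℕ} (γ : Fin k → Equiv.Perm (Fin n)) : Fin k → WithBot (Fin n) :=
  fun m => (γ m).support.min

open Equiv Equiv.Perm

namespace S18

variable {n : ℕ}

def M (σ : Perm (Fin n)) : Set (Fin n) := {x | ∀ y, σ.SameCycle x y → x ≤ y}

lemma count_le (σ : Perm (Fin n)) : cycleCount σ ≤ n := by
  unfold cycleCount
  calc _ ≤ (Set.univ : Set (Fin n)).ncard := Set.ncard_le_ncard (Set.subset_univ _)
    _ = n := by simp [Set.ncard_univ]

lemma count_one : cycleCount (1 : Perm (Fin n)) = n := by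
  have : {x : Fin n | ∀ y, (1 : Perm (Fin n)).SameCycle x y → x ≤ y} = Set.univ := by
    ext x; simp
  unfold cycleCount
  rw [this]; simp [Set.ncard_univ]

/-- closed predicates are preserved along cycles -/
lemma closed (σ : Perm (Fin n)) (p : Fin n → Prop) (h : ∀ x, p x → p (σ x)) {x y : Fin n}
    (hxy : σ.SameCycle x y) (hx : p x) : p y := by
  obtain ⟨m, -, -, rfl⟩ := hxy.exists_pow_eq σ
  clear hxy
  induction m with
  | zero => simpa using hx
  | succ m ih => rw [pow_succ']; exact h _ ih

/-- the min of a cycle -/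
lemma exists_min (σ : Perm (Fin n)) (x : Fin n) : ∃ m, σ.SameCycle x m ∧ m ∈ M σ := by
  obtain ⟨m, hm, hmin⟩ := Set.exists_min_image {y | σ.SameCycle x y} id (Set.toFinite _)
    ⟨x, SameCycle.refl σ x⟩
  exact ⟨m, hm, fun y hy => hmin y (SameCycle.trans hm hy)⟩

lemma M_unique {σ : Perm (Fin n)} {x y : Fin n} (hx : x ∈ M σ) (hy : y ∈ M σ)
    (h : σ.SameCycle x y) : x = y :=
  le_antisymm (hx y h) (hy x h.symm)

lemma swap_class {w : Perm (Fin n)} {i j : Fin n} (h : w.SameCycle i j) (x : Fin n) :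
    w.SameCycle x (swap i j x) := by
  rcases eq_or_ne x i with rfl | hi
  · simpa using h
  rcases eq_or_ne x j with rfl | hj
  · simpa using h.symm
  · rw [swap_apply_of_ne_of_ne hi hj]

lemma refine_of_same {w : Perm (Fin n)} {i j : Fin n} (h : w.SameCycle i j) {x y : Fin n}
    (hxy : (w * swap i j).SameCycle x y) : w.SameCycle x y := by
  refine closed _ (fun y => w.SameCycle x y) ?_ hxy (SameCycle.refl _ _)
  intro y hy
  have := hy.trans (swap_class h y)
  simpa using this

lemma merge {w : Perm (Fin n)} {i j : Fin n} (h : ¬ w.SameCycle i j) :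
    (w * swap i j).SameCycle i j := by
  have hex : ∃ p, 0 < p ∧ (w ^ p) i = i := ⟨orderOf w, orderOf_pos w, by simp [pow_orderOf_eq_one]⟩
  classical
  obtain ⟨hp, hpi⟩ := Nat.find_spec hex
  have hmin := fun q hq => Nat.find_min hex (m := q) hq
  set p := Nat.find hex
  have key : ∀ q, q + 1 ≤ p → ((w * swap i j) ^ (q+1)) j = (w ^ (q+1)) i := by
    intro q
    induction q with
    | zero => intro _; simp
    | succ q ih =>
      intro hq
      rw [pow_succ', Perm.mul_apply, ih (by omega), pow_succ' w (q+1), Perm.mul_apply, Perm.mul_apply,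
        swap_apply_of_ne_of_ne]
      · intro h1; exact hmin (q+1) (by omega) ⟨by omega, h1⟩
      · intro h1; exact h ⟨((q+1 : ℕ) : ℤ), by rw [zpow_natCast]; exact h1⟩
  have := key (p-1) (by omega)
  rw [show p - 1 + 1 = p by omega, hpi] at this
  exact SameCycle.symm ⟨(p : ℤ), by rw [zpow_natCast]; exact this⟩

lemma count_lt {w : Perm (Fin n)} {i j : Fin n} (h : ¬ w.SameCycle i j) :
    cycleCount (w * swap i j) < cycleCount w := by
  have hm := merge h
  have href : ∀ {x y}, w.SameCycle x y → (w * swap i j).SameCycle x y := by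
    intro x y hxy
    apply refine_of_same hm
    simpa [mul_assoc] using hxy
  apply Set.ncard_lt_ncard _ (Set.toFinite _)
  refine ⟨fun x hx y hy => hx y (href hy), fun hsub => ?_⟩
  obtain ⟨a, ha, haM⟩ := exists_min w i
  obtain ⟨b, hb, hbM⟩ := exists_min w j
  have := M_unique (hsub haM) (hsub hbM) ((href ha).symm.trans (hm.trans (href hb)))
  subst this
  exact h (ha.trans hb.symm)

lemma count_le_succ_aux {w : Perm (Fin n)} {i j a b : Fin n} (ha : w.SameCycle i a) (haM : a ∈ M w)
    (hb : w.SameCycle j b) (hbM : b ∈ M w) (hab : a ≤ b) :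
    cycleCount w ≤ cycleCount (w * swap i j) + 1 := by
  have : M w ⊆ insert b (M (w * swap i j)) := by
    intro x hx
    rcases eq_or_ne x b with hxb | hxb
    · exact Or.inl hxb
    right
    intro y hy
    have hc := closed (w * swap i j) (fun y => w.SameCycle x y ∨ (w.SameCycle x i ∧ w.SameCycle y j)
      ∨ (w.SameCycle x j ∧ w.SameCycle y i)) ?_ hy (Or.inl (SameCycle.refl _ _))
    · rcases hc with h | ⟨h1, h2⟩ | ⟨h1, h2⟩
      · exact hx y h
      · have : x = a := M_unique hx haM (h1.trans ha)
        rw [this]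
        exact hab.trans (hbM y (hb.symm.trans h2.symm))
      · exact absurd (M_unique hx hbM (h1.trans hb)) hxb
    · intro y hy
      rw [Perm.mul_apply]
      rcases eq_or_ne y i with rfl | hi
      · rw [swap_apply_left]
        simp only [sameCycle_apply_right, sameCycle_apply_left]
        rcases hy with h | ⟨h1, h2⟩ | ⟨h1, h2⟩
        · exact Or.inr (Or.inl ⟨h, SameCycle.refl _ _⟩)
        · exact Or.inl (h1.trans h2)
        · exact Or.inl h1
      rcases eq_or_ne y j with rfl | hj
      · rw [swap_apply_right]
        simp only [sameCycle_apply_right, sameCycle_apply_left]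
        rcases hy with h | ⟨h1, h2⟩ | ⟨h1, h2⟩
        · exact Or.inr (Or.inr ⟨h, SameCycle.refl _ _⟩)
        · exact Or.inl h1
        · exact Or.inl (h1.trans h2)
      · rw [swap_apply_of_ne_of_ne hi hj]
        simpa only [sameCycle_apply_right, sameCycle_apply_left] using hy
  exact (Set.ncard_le_ncard this (Set.toFinite _)).trans (Set.ncard_insert_le _ _)

lemma count_le_succ (w : Perm (Fin n)) (i j : Fin n) :
    cycleCount w ≤ cycleCount (w * swap i j) + 1 := by
  obtain ⟨a, ha, haM⟩ := exists_min w i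
  obtain ⟨b, hb, hbM⟩ := exists_min w j
  rcases le_total a b with h | h
  · exact count_le_succ_aux ha haM hb hbM h
  · rw [swap_comm]; exact count_le_succ_aux hb hbM ha haM h

lemma count_prod (L : List (Perm (Fin n))) (hL : ∀ t ∈ L, t.IsSwap) (w : Perm (Fin n)) :
    cycleCount w ≤ cycleCount (w * L.prod) + L.length := by
  induction L generalizing w with
  | nil => simp
  | cons t L ih =>
    obtain ⟨i, j, hij, rfl⟩ := hL t (by simp)
    have h1 := count_le_succ w i j
    have h2 := ih (fun t ht => hL t (by simp [ht])) (w * swap i j)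
    rw [List.prod_cons, ← mul_assoc, List.length_cons]
    omega

lemma le_count_prod (L : List (Perm (Fin n))) (hL : ∀ t ∈ L, t.IsSwap) :
    n ≤ cycleCount L.prod + L.length := by
  have := count_prod L hL 1
  rwa [count_one, one_mul] at this

lemma factor (r : ℕ) (σ : Perm (Fin n)) (h : n - cycleCount σ ≤ r) :
    ∃ L : List (Perm (Fin n)), (∀ t ∈ L, t.IsSwap) ∧ L.prod = σ ∧ L.length ≤ n - cycleCount σ := by
  induction r generalizing σ with
  | zero =>
    by_cases h1 : σ = 1
    · exact ⟨[], by simp, by simp [h1], by simp⟩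
    exfalso
    obtain ⟨x, hx⟩ : ∃ x, σ x ≠ x := by
      by_contra! hh; exact h1 (Equiv.ext hh)
    have h2 : ¬ (σ * swap x (σ⁻¹ x)).SameCycle x (σ⁻¹ x) := by
      intro h3
      have := closed _ (fun y => y = x) (by rintro y rfl; simp) h3 rfl
      apply hx; rw [eq_comm, ← Perm.inv_eq_iff_eq]; exact this
    have h4 := count_lt h2
    rw [mul_assoc, swap_mul_self, mul_one] at h4
    have := count_le (σ * swap x (σ⁻¹ x))
    omega
  | succ r ih =>
    by_cases h1 : σ = 1
    · exact ⟨[], by simp, by simp [h1], by simp⟩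
    obtain ⟨x, hx⟩ : ∃ x, σ x ≠ x := by
      by_contra! hh; exact h1 (Equiv.ext hh)
    have hne : σ⁻¹ x ≠ x := by
      intro h; apply hx; rw [eq_comm, ← Perm.inv_eq_iff_eq]; exact h
    have h2 : ¬ (σ * swap x (σ⁻¹ x)).SameCycle x (σ⁻¹ x) := by
      intro h3
      exact hne (closed _ (fun y => y = x) (by rintro y rfl; simp) h3 rfl)
    have h4 := count_lt h2
    rw [mul_assoc, swap_mul_self, mul_one] at h4
    have := count_le (σ * swap x (σ⁻¹ x))
    obtain ⟨L, hL, hp, hl⟩ := ih (σ * swap x (σ⁻¹ x)) (by omega)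
    refine ⟨L ++ [swap x (σ⁻¹ x)], ?_, ?_, ?_⟩
    · intro t ht
      simp only [List.mem_append, List.mem_singleton] at ht
      rcases ht with ht | rfl
      · exact hL t ht
      · exact ⟨_, _, hne.symm, rfl⟩
    · simp [hp, mul_assoc]
    · simp; omega

/-- every cycle is cyclically increasing -/
def Inc (w : Perm (Fin n)) : Prop :=
  ∀ x y, w.SameCycle x y → ¬ (x < y ∧ y < w x) ∧ (w x ≤ x → w x ≤ y ∧ y ≤ x)

lemma inc_rotate (n : ℕ) : Inc (finRotate n) := by
  intro x y _
  cases n with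
  | zero => exact x.elim0
  | succ m =>
    rcases eq_or_ne x (Fin.last m) with rfl | hx
    · rw [finRotate_last]
      exact ⟨fun h => absurd (Fin.le_last y) (not_le.2 h.1), fun _ => ⟨Fin.zero_le _, Fin.le_last _⟩⟩
    · have : ((finRotate (m+1) x : Fin (m+1)) : ℕ) = x + 1 := coe_finRotate_of_ne_last hx
      constructor
      · rintro ⟨h1, h2⟩
        rw [Fin.lt_def] at h1 h2; omega
      · intro h
        rw [Fin.le_def] at h; omega

lemma split_iff {w : Perm (Fin n)} {i j : Fin n} (hI : Inc w) (hij : i < j) (h : w.SameCycle i j)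
    {x y : Fin n} (hxy : (w * swap i j).SameCycle x y)
    (hx : w.SameCycle i x ∧ i < x ∧ x ≤ j) : w.SameCycle i y ∧ i < y ∧ y ≤ j := by
  refine closed (w * swap i j) (fun x => w.SameCycle i x ∧ i < x ∧ x ≤ j) ?_ hxy hx
  rintro x ⟨h1, h2, h3⟩
  rw [Perm.mul_apply]
  rcases eq_or_ne x j with rfl | hj
  · rw [swap_apply_right]
    have := hI i x h
    refine ⟨by simp [SameCycle.refl], ?_, ?_⟩
    · by_contra hc; exact absurd (this.2 (not_lt.1 hc)).2 (not_le.2 hij)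
    · by_contra hc; exact this.1 ⟨hij, not_le.1 hc⟩
  · rw [swap_apply_of_ne_of_ne h2.ne' hj]
    have := hI x j (h1.symm.trans h)
    have hxj := lt_of_le_of_ne h3 hj
    refine ⟨by simpa using h1, ?_, ?_⟩
    · by_contra hc
      exact absurd (this.2 ((not_lt.1 hc).trans h2.le)).2 (not_le.2 hxj)
    · by_contra hc; exact this.1 ⟨hxj, not_le.1 hc⟩

lemma inc_step {w : Perm (Fin n)} {i j : Fin n} (hI : Inc w) (hij : i < j) (h : w.SameCycle i j) :
    Inc (w * swap i j) := by
  intro x y hxy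
  have hw := refine_of_same h hxy
  rw [Perm.mul_apply]
  rcases eq_or_ne x i with rfl | hi
  · rw [swap_apply_left]
    have hy : ¬ (x < y ∧ y ≤ j) := fun hc =>
      absurd (split_iff hI hij h hxy.symm ⟨hw, hc⟩).2.1 (lt_irrefl _)
    have h1 := hI j y (h.symm.trans hw)
    have h2 := hI j x h.symm
    have h3 := hI j (w j) (by simp [SameCycle.refl])
    simp only [Fin.lt_def, Fin.le_def] at *
    omega
  rcases eq_or_ne x j with rfl | hj
  · rw [swap_apply_right]
    have hy := split_iff hI hij h hxy ⟨h, hij, le_rfl⟩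
    have h1 := hI i y (h.trans hw)
    have h2 := hI i x h
    simp only [Fin.lt_def, Fin.le_def] at *
    omega
  · rw [swap_apply_of_ne_of_ne hi hj]
    exact hI x y hw

/-- minimum of the support -/
def mn (σ : Perm (Fin n)) : WithTop (Fin n) := σ.support.min

lemma mn_swap {i j : Fin n} (h : i < j) : mn (swap i j) = (i : WithTop (Fin n)) := by
  unfold mn
  rw [support_swap h.ne, Finset.min_insert, Finset.min_singleton]
  exact min_eq_left (by exact_mod_cast h.le)

lemma swap_rep {σ : Perm (Fin n)} (h : σ.IsSwap) :
    ∃ i j, i < j ∧ σ = swap i j ∧ mn σ = (i : WithTop (Fin n)) := by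
  obtain ⟨i, j, hij, rfl⟩ := h
  rcases lt_or_gt_of_ne hij with h | h
  · exact ⟨i, j, h, rfl, mn_swap h⟩
  · exact ⟨j, i, h, swap_comm _ _, by rw [swap_comm]; exact mn_swap h⟩

lemma swap_sq {σ : Perm (Fin n)} (h : σ.IsSwap) : σ * σ = 1 := by
  obtain ⟨i, j, _, rfl⟩ := h; exact swap_mul_self _ _

lemma conj_swap {τ ρ : Perm (Fin n)} (hτ : τ.IsSwap) (hρ : ρ.IsSwap) : (τ * ρ * τ).IsSwap := by
  obtain ⟨i, j, hij, rfl⟩ := hρ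
  have : τ⁻¹ = τ := inv_eq_of_mul_eq_one_left (swap_sq hτ)
  refine ⟨τ i, τ j, fun h => hij (τ.injective h), ?_⟩
  rw [swap_apply_apply, this]

lemma conj_mn {τ ρ : Perm (Fin n)} (hτ : τ.IsSwap) (hρ : ρ.IsSwap) (h : mn ρ < mn τ) :
    mn (τ * ρ * τ) = mn ρ := by
  have hinv : τ⁻¹ = τ := inv_eq_of_mul_eq_one_left (swap_sq hτ)
  obtain ⟨i, j, hij, rfl, hm⟩ := swap_rep hρ
  obtain ⟨a, b, hab, hτe, hm'⟩ := swap_rep hτ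
  rw [hm, hm'] at h
  have hia : i < a := by exact_mod_cast h
  have e : τ * swap i j * τ = swap (τ i) (τ j) := by rw [swap_apply_apply, hinv]
  rw [e, hm]
  have h1 : τ i = i := by rw [hτe, swap_apply_of_ne_of_ne hia.ne (hia.trans hab).ne]
  rw [h1]
  apply mn_swap
  rw [hτe, swap_apply_def]
  split_ifs
  · exact hia.trans hab
  · exact hia
  · exact hij

lemma same_of_count {w v : Perm (Fin n)} {i j : Fin n} (e : w = v * swap i j)
    (h : cycleCount w < cycleCount v) : w.SameCycle i j := by
  by_contra hc
  have := count_lt hc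
  rw [e, mul_assoc, swap_mul_self, mul_one, ← e] at this
  omega

lemma inc_of (L : List (Perm (Fin n))) (hL : ∀ t ∈ L, t.IsSwap) (w : Perm (Fin n))
    (hI : Inc (w * L.prod)) (hc : cycleCount (w * L.prod) + L.length ≤ cycleCount w) : Inc w := by
  induction L generalizing w with
  | nil => simpa using hI
  | cons t L ih =>
    obtain ⟨i, j, hij, rfl, -⟩ := swap_rep (hL t (by simp))
    have hL' : ∀ t ∈ L, t.IsSwap := fun t ht => hL t (by simp [ht])
    rw [List.prod_cons, ← mul_assoc] at hI hc
    rw [List.length_cons] at hc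
    have h1 := count_prod L hL' (w * swap i j)
    have h2 := count_le_succ w i j
    have hI' := ih hL' (w * swap i j) hI (by omega)
    have := inc_step hI' hij (same_of_count rfl (by omega))
    rwa [mul_assoc, swap_mul_self, mul_one] at this

lemma conj_prod {τ : Perm (Fin n)} (h : τ * τ = 1) (B : List (Perm (Fin n))) :
    (B.map (fun ρ => τ * ρ * τ)).prod * τ = τ * B.prod := by
  induction B with
  | nil => simp
  | cons b B ih =>
    rw [List.map_cons, List.prod_cons, mul_assoc, ih, List.prod_cons]
    simp only [mul_assoc]
    rw [← mul_assoc τ τ, h, one_mul]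

lemma same_of_mem {C : List (Perm (Fin n))} (hC : ∀ t ∈ C, t.IsSwap)
    (hr : cycleCount C.prod + C.length = n) {i j : Fin n} (hm : swap i j ∈ C) :
    C.prod.SameCycle i j := by
  obtain ⟨D, E, rfl⟩ := List.append_of_mem hm
  have hs := swap_mul_self i j
  have hs' := hC _ hm
  have e : (D ++ swap i j :: E).prod =
      (D ++ E.map (fun ρ => swap i j * ρ * swap i j)).prod * swap i j := by
    rw [List.prod_append, List.prod_append, mul_assoc, conj_prod hs, List.prod_cons]
  apply same_of_count e
  have := le_count_prod (D ++ E.map (fun ρ => swap i j * ρ * swap i j)) (by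
    intro t ht
    simp only [List.mem_append, List.mem_map] at ht
    rcases ht with ht | ⟨r, hr, rfl⟩
    · exact hC t (by simp [ht])
    · exact conj_swap hs' (hC r (by simp [hr])))
  simp only [List.length_append, List.length_map, List.length_cons] at this hr
  omega

lemma fix_of_forall {C : List (Perm (Fin n))} {j : Fin n} (h : ∀ t ∈ C, t j = j) : C.prod j = j := by
  induction C with
  | nil => simp
  | cons t C ih =>
    rw [List.prod_cons, Perm.mul_apply, ih (fun t ht => h t (by simp [ht])), h t (by simp)]

/-- the last entry is determined -/
lemma last_det {C : List (Perm (Fin n))} {τ w : Perm (Fin n)} (hC : ∀ t ∈ C, t.IsSwap)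
    (hτ : τ.IsSwap) (hw : w = C.prod * τ) (hr : cycleCount w + (C.length + 1) = n) (hI : Inc w)
    (hmax : ∀ t ∈ C, mn t ≤ mn τ) :
    Inc C.prod ∧ cycleCount C.prod + C.length = n ∧
      ∃ i : Fin n, mn τ = (i : WithTop (Fin n)) ∧ τ = swap i (w i) := by
  obtain ⟨i, j, hij, rfl, hm⟩ := swap_rep hτ
  have h1 := le_count_prod C hC
  have h2 := count_le_succ C.prod i j
  rw [← hw] at h2
  have hsame : w.SameCycle i j := same_of_count hw (by omega)
  have e : C.prod = w * swap i j := by rw [hw, mul_assoc, swap_mul_self, mul_one]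
  have hred : cycleCount C.prod + C.length = n := by omega
  refine ⟨e ▸ inc_step hI hij hsame, hred, i, hm, ?_⟩
  have hfix : C.prod j = j := by
    apply fix_of_forall
    intro t ht
    by_contra hne
    obtain ⟨a, b, hab, rfl, hmt⟩ := swap_rep (hC t ht)
    have hs := same_of_mem hC hred ht
    have hle := hmax _ ht
    rw [hm, hmt] at hle
    have hai : a ≤ i := by exact_mod_cast hle
    have hja : C.prod.SameCycle j a := by
      rcases eq_or_ne j a with rfl | h1
      · exact SameCycle.refl _ _
      rcases eq_or_ne j b with rfl | h2
      · exact hs.symm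
      · exact absurd (swap_apply_of_ne_of_ne h1 h2) hne
    rw [e] at hja
    have := split_iff hI hij hsame hja ⟨hsame, hij, le_rfl⟩
    exact absurd this.2.1 (not_lt.2 hai)
  have : w i = j := by rw [hw, Perm.mul_apply, swap_apply_left, hfix]
  rw [this]

lemma exists_last_max {α : Type*} [LinearOrder α] (l : List α) (h : l ≠ []) :
    ∃ p m q, l = p ++ m :: q ∧ (∀ x ∈ p, x ≤ m) ∧ ∀ x ∈ q, x < m := by
  induction l with
  | nil => exact absurd rfl h
  | cons a l ih =>
    by_cases hl : l = []
    · subst hl; exact ⟨[], a, [], by simp, by simp, by simp⟩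
    obtain ⟨p, m, q, rfl, hp, hq⟩ := ih hl
    rcases le_or_gt a m with ham | ham
    · refine ⟨a :: p, m, q, by simp, ?_, hq⟩
      simpa [ham] using hp
    · refine ⟨[], a, p ++ m :: q, by simp, by simp, ?_⟩
      intro x hx
      simp only [List.mem_append, List.mem_cons] at hx
      rcases hx with hx | rfl | hx
      · exact (hp x hx).trans_lt ham
      · exact ham
      · exact (hq x hx).trans ham

lemma peel {L A B : List (Perm (Fin n))} {τ : Perm (Fin n)} (hLe : L = A ++ τ :: B)
    (hL : ∀ t ∈ L, t.IsSwap) (hr : cycleCount L.prod + L.length = n) (hI : Inc L.prod)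
    (hA : ∀ t ∈ A, mn t ≤ mn τ) (hB : ∀ t ∈ B, mn t < mn τ) :
    ∃ C : List (Perm (Fin n)), C = A ++ B.map (fun ρ => τ * ρ * τ) ∧ (∀ t ∈ C, t.IsSwap) ∧
      L.prod = C.prod * τ ∧ C.map mn = A.map mn ++ B.map mn ∧ Inc C.prod ∧
      cycleCount C.prod + C.length = n ∧
      ∃ i : Fin n, mn τ = (i : WithTop (Fin n)) ∧ τ = swap i (L.prod i) := by
  have hτ : τ.IsSwap := hL τ (by simp [hLe])
  have hBs : ∀ t ∈ B, t.IsSwap := fun t ht => hL t (by simp [hLe, ht])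
  have hC : ∀ t ∈ A ++ B.map (fun ρ => τ * ρ * τ), t.IsSwap := by
    intro t ht
    simp only [List.mem_append, List.mem_map] at ht
    rcases ht with ht | ⟨r, hr, rfl⟩
    · exact hL t (by simp [hLe, ht])
    · exact conj_swap hτ (hBs r hr)
  have hp : L.prod = (A ++ B.map (fun ρ => τ * ρ * τ)).prod * τ := by
    rw [hLe, List.prod_append, List.prod_append, mul_assoc, conj_prod (swap_sq hτ), List.prod_cons]
  have hmap : (A ++ B.map (fun ρ => τ * ρ * τ)).map mn = A.map mn ++ B.map mn := by
    rw [List.map_append, List.map_map]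
    congr 1
    apply List.map_congr_left
    intro r hr
    exact conj_mn hτ (hBs r hr) (hB r hr)
  have hl := last_det hC hτ hp (by
    rw [hLe] at hr
    simp only [List.length_append, List.length_cons, List.length_map] at hr ⊢
    rw [hLe]; omega) hI (by
    intro t ht
    simp only [List.mem_append, List.mem_map] at ht
    rcases ht with ht | ⟨r, hr, rfl⟩
    · exact hA t ht
    · rw [conj_mn hτ (hBs r hr) (hB r hr)]; exact (hB r hr).le)
  exact ⟨_, rfl, hC, hp, hmap, hl.1, hl.2.1, hl.2.2⟩

lemma uniq (k : ℕ) (L L' : List (Perm (Fin n))) (hk : L.length = k)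
    (hL : ∀ t ∈ L, t.IsSwap) (hL' : ∀ t ∈ L', t.IsSwap)
    (hr : cycleCount L.prod + L.length = n) (hI : Inc L.prod)
    (hp : L.prod = L'.prod) (hm : L.map mn = L'.map mn) : L = L' := by
  induction k generalizing L L' with
  | zero =>
    have : L = [] := List.length_eq_zero_iff.1 hk
    subst this
    exact (List.map_eq_nil_iff.1 hm.symm).symm
  | succ k ih =>
    have hlen : L.length = L'.length := by simpa using congrArg List.length hm
    have hne : L.map mn ≠ [] := by
      intro h; rw [List.map_eq_nil_iff] at h; subst h; simp at hk
    obtain ⟨p, m, q, he, hpm, hqm⟩ := exists_last_max _ hne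
    have he' := hm.symm.trans he
    obtain ⟨A, R, hLe, hA, hR⟩ := List.map_eq_append_iff.1 he
    obtain ⟨τ, B, hRe, hτ, hB⟩ := List.map_eq_cons_iff.1 hR
    obtain ⟨A', R', hLe', hA', hR'⟩ := List.map_eq_append_iff.1 he'
    obtain ⟨τ', B', hRe', hτ', hB'⟩ := List.map_eq_cons_iff.1 hR'
    subst hRe hRe'
    obtain ⟨C, hCe, hC, hCp, hCm, hCI, hCr, i, hi, hτi⟩ := peel hLe hL hr hI
      (fun t ht => by rw [hτ]; exact hpm _ (hA ▸ List.mem_map_of_mem ht))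
      (fun t ht => by rw [hτ]; exact hqm _ (hB ▸ List.mem_map_of_mem ht))
    obtain ⟨C', hCe', hC', hCp', hCm', hCI', hCr', i', hi', hτi'⟩ := peel hLe' hL'
      (by rw [← hp, ← hlen]; exact hr) (hp ▸ hI)
      (fun t ht => by rw [hτ']; exact hpm _ (hA' ▸ List.mem_map_of_mem ht))
      (fun t ht => by rw [hτ']; exact hqm _ (hB' ▸ List.mem_map_of_mem ht))
    have hii : i = i' := by
      have : (i : WithTop (Fin n)) = i' := by rw [← hi, ← hi', hτ, hτ']
      exact_mod_cast this
    have hττ : τ = τ' := by rw [hτi, hτi', ← hp, hii]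
    subst hττ
    have hCC : C = C' := by
      apply ih C C' _ hC hC' hCr hCI
      · apply mul_right_cancel (b := τ); rw [← hCp, ← hCp', hp]
      · rw [hCm, hCm', hA, hA', hB, hB']
      · rw [hCe]; rw [hLe] at hk; simp at hk ⊢; omega
    rw [hCe, hCe'] at hCC
    have hAl : A.length = A'.length := by
      have := congrArg List.length (hA.trans hA'.symm); simpa using this
    obtain ⟨h1, h2⟩ := List.append_inj hCC hAl
    have h3 : B = B' := by
      refine List.map_injective_iff.2 ?_ h2
      intro a b hab
      simpa using hab
    rw [hLe, hLe', h1, h3]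

lemma ofFn_prod_adj {G : Type*} [Monoid G] (k : ℕ) (f g : Fin k → G) (a b : Fin k)
    (hab : (b : ℕ) = a + 1) (h : f a * f b = g a * g b) (ho : ∀ m, m ≠ a → m ≠ b → f m = g m) :
    (List.ofFn f).prod = (List.ofFn g).prod := by
  induction k with
  | zero => exact a.elim0
  | succ k ih =>
    rw [List.ofFn_succ, List.ofFn_succ, List.prod_cons, List.prod_cons]
    obtain ⟨b', rfl⟩ : ∃ b' : Fin k, b = b'.succ := by
      refine ⟨⟨a, by omega⟩, ?_⟩
      ext; simp [hab]
    rcases Fin.eq_zero_or_eq_succ a with rfl | ⟨a', rfl⟩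
    · cases k with
      | zero => exact b'.elim0
      | succ k =>
        have : b' = 0 := by ext; simpa using hab
        subst this
        rw [List.ofFn_succ, List.ofFn_succ, List.prod_cons, List.prod_cons, ← mul_assoc, ← mul_assoc,
          h]
        congr 3
        funext m
        apply ho
        · exact Fin.succ_ne_zero _
        · intro hh; exact Fin.succ_ne_zero _ (Fin.succ_injective _ hh)
    · rw [ih (fun m => f m.succ) (fun m => g m.succ) a' b' (by simpa using hab) h (fun m h1 h2 =>
        ho _ (fun h => h1 (Fin.succ_injective _ h)) (fun h => h2 (Fin.succ_injective _ h)))]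
      rw [ho 0 (Fin.succ_ne_zero _).symm (Fin.succ_ne_zero _).symm]

lemma sigma_facts {k : ℕ} {γ : Fin k → Perm (Fin n)} (h : γ ∈ SigmaSet n k) :
    (∀ t ∈ List.ofFn γ, t.IsSwap) ∧
      cycleCount (List.ofFn γ).prod + (List.ofFn γ).length = n ∧ Inc (List.ofFn γ).prod := by
  obtain ⟨h1, h2, h3⟩ := h
  unfold precLe at h3
  unfold normPerm at h2 h3
  set w := (List.ofFn γ).prod
  obtain ⟨L, hL, hp, hl⟩ := factor _ (w⁻¹ * finRotate n) le_rfl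
  have c1 := count_le w
  have c2 := count_le (finRotate n)
  have c3 := count_le (w⁻¹ * finRotate n)
  have e : w * L.prod = finRotate n := by rw [hp, mul_inv_cancel_left]
  refine ⟨?_, ?_, ?_⟩
  · intro t ht
    obtain ⟨m, rfl⟩ := List.mem_ofFn.1 ht
    exact h1 m
  · rw [List.length_ofFn]; omega
  · apply inc_of L hL w
    · rw [e]; exact inc_rotate n
    · rw [e]; omega

lemma uniqF {k : ℕ} {γ γ' : Fin k → Perm (Fin n)} (h : γ ∈ SigmaSet n k) (h' : γ' ∈ SigmaSet n k)
    (hp : (List.ofFn γ).prod = (List.ofFn γ').prod) (hm : Pmap γ = Pmap γ') : γ = γ' := by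
  obtain ⟨h1, h2, h3⟩ := sigma_facts h
  obtain ⟨h1', h2', h3'⟩ := sigma_facts h'
  apply List.ofFn_injective
  apply uniq _ _ _ rfl h1 h1' h2 h3 hp
  rw [List.map_ofFn, List.map_ofFn]
  congr 1

lemma sl_facts {k : ℕ} {γ : Fin k → Perm (Fin n)} (h : γ ∈ SigmaSet n k) (a b : Fin k)
    (hab : (b : ℕ) = a + 1) :
    slGen γ a b ∈ SigmaSet n k ∧ (List.ofFn (slGen γ a b)).prod = (List.ofFn γ).prod ∧
      Pmap (slGen γ a b) = fun m => Pmap γ ((swap a b) m) := by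
  have hne : a ≠ b := by rintro rfl; omega
  have hsw := h.1
  have ha := swap_sq (hsw a)
  have hb := swap_sq (hsw b)
  have hprod : (List.ofFn (slGen γ a b)).prod = (List.ofFn γ).prod := by
    apply ofFn_prod_adj k _ _ a b hab
    · unfold slGen
      simp only [hne.symm, if_true, if_false]
      split_ifs
      · rfl
      · rw [← mul_assoc, ← mul_assoc, hb, one_mul]
      · rw [mul_assoc, ha, mul_one]
    · intro m h1 h2
      simp [slGen, h1, h2]
  have hswap : ∀ m, (slGen γ a b m).IsSwap := by
    intro m
    unfold slGen
    split_ifs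
    all_goals first | exact hsw _ | exact conj_swap (hsw _) (hsw _)
  refine ⟨⟨hswap, by rw [hprod]; exact h.2.1, by rw [hprod]; exact h.2.2⟩, hprod, ?_⟩
  funext m
  change mn (slGen γ a b m) = mn (γ (swap a b m))
  have hd : slGen γ a b m = if mn (γ a) = mn (γ b) then γ m
    else if mn (γ a) < mn (γ b) then
      if m = a then γ b else if m = b then γ b * γ a * γ b else γ m
    else
      if m = a then γ a * γ b * γ a else if m = b then γ a else γ m := rfl
  rw [hd, swap_apply_def]
  split_ifs with h1 h2 h3 h4 h5 h6 h7
  all_goals try subst m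
  all_goals first
    | rfl
    | exact h1
    | exact h1.symm
    | exact conj_mn (hsw _) (hsw _) ‹_›
    | exact conj_mn (hsw _) (hsw _) (lt_of_le_of_ne (not_lt.1 ‹_›) (Ne.symm h1))

lemma exists_act {k : ℕ} (π : Perm (Fin k)) : ∀ γ : {γ : Fin k → Perm (Fin n) // γ ∈ SigmaSet n k},
    ∃ γ' : {γ : Fin k → Perm (Fin n) // γ ∈ SigmaSet n k},
      (List.ofFn γ'.1).prod = (List.ofFn γ.1).prod ∧ Pmap γ'.1 = fun m => Pmap γ.1 (π⁻¹ m) := by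
  cases k with
  | zero =>
    intro γ
    exact ⟨γ, rfl, by funext m; exact m.elim0⟩
  | succ k =>
    have hπ : π ∈ Submonoid.closure (Set.range fun i : Fin k => swap i.castSucc i.succ) := by
      rw [Equiv.Perm.mclosure_swap_castSucc_succ]; trivial
    induction hπ using Submonoid.closure_induction with
    | mem x hx =>
      obtain ⟨i, rfl⟩ := hx
      intro γ
      obtain ⟨h1, h2, h3⟩ := sl_facts γ.2 i.castSucc i.succ (by simp)
      exact ⟨⟨_, h1⟩, h2, by rw [h3]; simp⟩
    | one => intro γ; exact ⟨γ, rfl, by simp⟩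
    | mul x y _ _ hx hy =>
      intro γ
      obtain ⟨γ1, h1, h2⟩ := hy γ
      obtain ⟨γ2, h3, h4⟩ := hx γ1
      refine ⟨γ2, h3.trans h1, ?_⟩
      rw [h4, h2]
      funext m
      simp

end S18

/-- There is an action • of S_k on Σ_n(k) such that (1) each Coxeter generator
σ_l = (l, l+1) acts by s_l, (2) P is equivariant: P(π • γ) = π · P(γ), where
(π · v)_m = v_{π⁻¹(m)}, and (3) P preserves stabilisers: π • γ = γ iff π · P(γ) = P(γ). -/
theorem stmt18 (n k : ℕ) :
    ∃ act : Equiv.Perm (Fin k) →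
        {γ : Fin k → Equiv.Perm (Fin n) // γ ∈ SigmaSet n k} →
        {γ : Fin k → Equiv.Perm (Fin n) // γ ∈ SigmaSet n k},
      (∀ γ, act 1 γ = γ) ∧
      (∀ π ρ γ, act (π * ρ) γ = act π (act ρ γ)) ∧
      (∀ a b : Fin k, (b : ℕ) = (a : ℕ) + 1 →
        ∀ γ, (act (Equiv.swap a b) γ).1 = slGen γ.1 a b) ∧
      (∀ π γ, Pmap (act π γ).1 = fun m => Pmap γ.1 (π⁻¹ m)) ∧
      (∀ π γ, act π γ = γ ↔ (fun m => Pmap γ.1 (π⁻¹ m)) = Pmap γ.1) := by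
  choose act hprod hP using fun π : Equiv.Perm (Fin k) => S18.exists_act (n := n) π
  have key : ∀ π γ γ', (List.ofFn γ'.1).prod = (List.ofFn γ.1).prod →
      Pmap γ'.1 = (fun m => Pmap γ.1 (π⁻¹ m)) → act π γ = γ' := by
    intro π γ γ' h1 h2
    apply Subtype.ext
    exact S18.uniqF (act π γ).2 γ'.2 ((hprod π γ).trans h1.symm) ((hP π γ).trans h2.symm)
  refine ⟨act, ?_, ?_, ?_, hP, ?_⟩
  · intro γ
    exact key 1 γ γ rfl (by simp)
  · intro π ρ γ
    apply key
    · rw [hprod, hprod]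
    · rw [hP, hP]; funext m; simp
  · intro a b hab γ
    obtain ⟨h1, h2, h3⟩ := S18.sl_facts γ.2 a b hab
    exact congrArg Subtype.val (key (Equiv.swap a b) γ ⟨_, h1⟩ h2 (by rw [h3]; simp))
  · intro π γ
    constructor
    · intro h
      rw [← hP, h]
    · intro h
      exact key π γ γ rfl h.symm
end
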